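/- Let k > 9/2. There exists a constant C depending only on k such that for all Schwartz functions f, g, h on ℝ³: | ⟨Q(g,f), h⟨v⟩^{2k}⟩ | ≤ C ‖g‖_{L²_k} ‖f⟨v⟩^k‖_{𝖧¹_A} ( ‖h⟨v⟩^k‖_{𝖧¹_A} + ‖h‖_{L²_k} ). -/

import Mathlib

/-!
Write `F = ⟨v⟩^k f`, `H = ⟨v⟩^k h`, and let `b_i(z) = Σ_j ∂_j a_ij(z) = -2 z_i |z|⁻³` be the drift
kernel. Moving the derivative off `g` (`sum_cv_a`), `Q(g,f)` is the divergence of the flux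
`(a * g) ∇f - (b * g) f` (`landauQ_eq`), so the pairing is minus the integral of this flux against
`∇(⟨v⟩^{2k} h)`.

* Diffusion. `a(v - w)` annihilates `v - w`, so `a(v - w) p · q` involves only the cross products
  `(v - w) × p` and `(v - w) × q`. Hence it is bounded by `⟨v⟩⁻³ ⟨w⟩³ (1 + |v - w|⁻¹)` times the
  quadratic forms `|p|² + |v × p|²` and `|q|² + |v × q|²` (`a_bound`), which are the densities of
  the anisotropic norm. The loss `⟨w⟩³` is paid for by `‖g‖_{L²_k}` through Cauchy–Schwarz, because
  `⟨w⟩^{6-2k}` is integrable for `k > 9/2` (`L_one`). Commuting with the weights changes `∇F` and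
  `∇H` only by radial terms, invisible to `v × ·` (`Sq_shift`).

* Singular drift. The kernel `b` alone decays only like `|z|⁻²`, but both its difference to the soft
  kernel `-2 z ⟨z⟩⁻³` (`bdiff_bound`) and its product with the factor `v_i ⟨v⟩⁻²` coming from the
  derivative of the weight (`bcoord_bound`) are bounded by `⟨v⟩⁻³ ⟨w⟩³ (1 + |v - w|⁻²)`. By
  Cauchy–Schwarz (`L_two`) this leaves `∫ ⟨v⟩⁻³ F(v)² ∫ ⟨w⟩^{2k} g(w)² (1 + |v - w|⁻²) dw dv`, and
  Tonelli together with Hardy's inequality in `v` for `⟨v⟩^{-3/2} F` bounds it by the anisotropic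
  norm of `F` (`N_bound`).

* Soft drift. The remaining term `∫ (b_soft * g) F · ∇H` is integrated by parts a second time
  (`pair_eq`). The soft kernel and its divergence gain `⟨v⟩^{-3/2}` (`bf_bound`, `pd_bf_bound'`),
  which is absorbed by `F`; this is where the term `‖h‖_{L²_k}` enters.

`G1_bound` and `G2_bound` collect the resulting pointwise bounds, and Cauchy–Schwarz in `v`
(`cs_bound`) concludes.
-/

open MeasureTheory Real Finset

noncomputable section

abbrev E3 := EuclideanSpace ℝ (Fin 3)

/-- The Japanese bracket `⟨v⟩ = √(1+|v|²)`. -/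
def jap (v : E3) : ℝ := Real.sqrt (1 + ‖v‖ ^ 2)

/-- The projection matrix `Π(z)` with entries `δ_ij − z_i z_j / |z|²`. -/
def Pi3 (z : E3) : Matrix (Fin 3) (Fin 3) ℝ :=
  Matrix.of fun i j => (if i = j then (1 : ℝ) else 0) - z i * z j / ‖z‖ ^ 2

/-- The Coulomb Landau kernel `a(z) = |z|⁻¹ Π(z)`. -/
def aK (z : E3) : Matrix (Fin 3) (Fin 3) ℝ :=
  Matrix.of fun i j => ‖z‖⁻¹ * Pi3 z i j

/-- Partial derivative `∂_i f`. -/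
def pd (i : Fin 3) (f : E3 → ℝ) : E3 → ℝ :=
  fun v => fderiv ℝ f v (EuclideanSpace.single i 1)

/-- The Landau collision operator with Coulomb potential:
`Q(g,h)(v) = ∇_v · ∫ a(v−v*) ( g(v*) ∇h(v) − ∇g(v*) h(v) ) dv*`. -/
def landauQ (g h : E3 → ℝ) : E3 → ℝ := fun v =>
  ∑ i : Fin 3, fderiv ℝ (fun w =>
      ∫ vs : E3, ∑ j : Fin 3, aK (w - vs) i j * (g vs * pd j h w - pd j g vs * h w)) v
    (EuclideanSpace.single i 1)

/-- The pairing `⟨f,g⟩ = ∫ f g dv`. -/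
def pairL (f g : E3 → ℝ) : ℝ := ∫ v : E3, f v * g v

/-- Weighted Lebesgue norm `‖f‖_{L^p_l} = (∫ |f|^p ⟨v⟩^{lp})^{1/p}`. -/
def Lpl (p l : ℝ) (f : E3 → ℝ) : ℝ :=
  (∫ v : E3, |f v| ^ p * jap v ^ (l * p)) ^ (1 / p)

/-- Iterated partial derivative in direction `i`. -/
def pdPow (i : Fin 3) : ℕ → (E3 → ℝ) → E3 → ℝ
  | 0, f => f
  | n + 1, f => pd i (pdPow i n f)

/-- Multi-index partial derivative `∂^m f`. -/
def pdM (m : Fin 3 → ℕ) (f : E3 → ℝ) : E3 → ℝ :=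
  pdPow 0 (m 0) (pdPow 1 (m 1) (pdPow 2 (m 2) f))

/-- Multi-indices `m` with `|m| ≤ n`. -/
def multiIdx (n : ℕ) : Finset (Fin 3 → ℕ) :=
  (Fintype.piFinset fun _ : Fin 3 => Finset.range (n + 1)).filter fun m => (∑ i, m i) ≤ n

/-- Square of the weighted Sobolev norm `‖f‖²_{H^n_l} = Σ_{|m|≤n} ‖∂^m f‖²_{L²_l}`. -/
def HSobSq (n : ℕ) (l : ℝ) (f : E3 → ℝ) : ℝ :=
  ∑ m ∈ multiIdx n, (Lpl 2 l (pdM m f)) ^ 2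

/-- Weighted Sobolev norm `‖f‖_{H^n_l}`. -/
def HSob (n : ℕ) (l : ℝ) (f : E3 → ℝ) : ℝ :=
  Real.sqrt (HSobSq n l f)

/-- Rotational derivative `(v_i ∂_j − v_j ∂_i) f`. -/
def rotD (i j : Fin 3) (f : E3 → ℝ) : E3 → ℝ :=
  fun v => v i * pd j f v - v j * pd i f v

/-- Square of the anisotropic norm
`‖f‖²_{𝖧¹_A} = Σ_{i<j} ‖(v_i ∂_j − v_j ∂_i) f‖²_{L²_{−3/2}} + ‖f‖²_{H¹_{−3/2}}`. -/
def HAsq (f : E3 → ℝ) : ℝ :=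
  (∑ p ∈ Finset.univ.filter (fun p : Fin 3 × Fin 3 => p.1 < p.2),
    (Lpl 2 (-(3/2)) (rotD p.1 p.2 f)) ^ 2) + HSobSq 1 (-(3/2)) f

/-- The anisotropic norm `‖f‖_{𝖧¹_A}`. -/
def HA (f : E3 → ℝ) : ℝ := Real.sqrt (HAsq f)

end

/-! ### Weights and Schwartz functions -/

lemma jap_sq (v : E3) : jap v ^ 2 = 1 + ‖v‖ ^ 2 := Real.sq_sqrt (by positivity)

lemma one_le_jap (v : E3) : 1 ≤ jap v := by
  rw [jap, Real.one_le_sqrt]; nlinarith [sq_nonneg ‖v‖]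

lemma jap_pos (v : E3) : 0 < jap v := lt_of_lt_of_le one_pos (one_le_jap v)

lemma norm_le_jap (v : E3) : ‖v‖ ≤ jap v := Real.le_sqrt_of_sq_le (by linarith)

lemma norm_sq_eq (z : E3) : ‖z‖ ^ 2 = ∑ i, z i ^ 2 := EuclideanSpace.real_norm_sq_eq z

lemma abs_coord_le (z : E3) (i : Fin 3) : |z i| ≤ ‖z‖ := by
  simpa using PiLp.norm_apply_le z i

/-- The Japanese bracket is 1-Lipschitz. -/
lemma jap_le_add (v w : E3) : jap v ≤ jap w + ‖v - w‖ := by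
  have h1 : ‖v‖ ≤ ‖w‖ + ‖v - w‖ := by
    have := norm_add_le w (v - w); simpa using this
  have h2 := norm_le_jap w
  have h3 := jap_sq w
  have h4 := norm_nonneg (v - w)
  have h5 := jap_pos w
  rw [jap, Real.sqrt_le_left (by positivity)]
  nlinarith [norm_nonneg v, norm_nonneg w]

lemma jap_rpow_eq (s : ℝ) : (fun v : E3 => jap v ^ s) = fun v => (1 + ‖v‖ ^ 2) ^ (s / 2) := by
  funext v
  rw [jap, Real.sqrt_eq_rpow, ← Real.rpow_mul (by positivity)]
  ring_nf

lemma jap_tg (s : ℝ) : (fun v : E3 => jap v ^ s).HasTemperateGrowth := by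
  rw [jap_rpow_eq]
  exact Function.hasTemperateGrowth_one_add_norm_sq_rpow E3 (s / 2)

lemma jap_continuous : Continuous jap := by unfold jap; fun_prop

@[fun_prop]
lemma jap_rpow_continuous (s : ℝ) : Continuous (fun v : E3 => jap v ^ s) :=
  jap_continuous.rpow_const fun v => Or.inl (jap_pos v).ne'

@[fun_prop]
lemma jap_rpow_differentiable (s : ℝ) : Differentiable ℝ (fun v : E3 => jap v ^ s) :=
  (jap_tg s).1.differentiable (by simp)

lemma hasFDerivAt_normsq (v : E3) :
    HasFDerivAt (fun w : E3 => ‖w‖ ^ 2) (2 • innerSL ℝ v) v := by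
  simpa using (hasStrictFDerivAt_norm_sq v).hasFDerivAt

lemma innerSL_single (v : E3) (i : Fin 3) :
    innerSL ℝ v (EuclideanSpace.single i (1:ℝ)) = v i := by
  simp [EuclideanSpace.inner_single_right]

lemma hasFDerivAt_rpow (c : ℝ) (hc : 0 < c) (s : ℝ) (v : E3) :
    HasFDerivAt (fun w : E3 => (c + ‖w‖ ^ 2) ^ s)
      ((s * (c + ‖v‖ ^ 2) ^ (s - 1)) • (2 • innerSL ℝ v)) v := by
  exact ((hasFDerivAt_normsq v).const_add c).rpow_const (Or.inl (by positivity))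

lemma pd_jap (s : ℝ) (i : Fin 3) (v : E3) :
    pd i (fun v => jap v ^ s) v = s * v i * jap v ^ (s - 2) := by
  have h := congrFun (jap_rpow_eq (s - 2)) v
  rw [pd, jap_rpow_eq, (hasFDerivAt_rpow 1 one_pos (s/2) v).fderiv, h]
  rw [show (s - 2) / 2 = s / 2 - 1 by ring]
  simp only [smul_apply, innerSL_single, smul_eq_mul, nsmul_eq_mul]
  push_cast; ring

/-- Multiplication of a Schwartz function by the weight `⟨v⟩^s`. -/
noncomputable def wS (s : ℝ) (F : SchwartzMap E3 ℝ) : SchwartzMap E3 ℝ :=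
  SchwartzMap.smulLeftCLM ℝ (fun v : E3 => jap v ^ s) F

lemma wS_apply (s : ℝ) (F : SchwartzMap E3 ℝ) (v : E3) : wS s F v = F v * jap v ^ s := by
  rw [wS, SchwartzMap.smulLeftCLM_apply_apply (jap_tg s), smul_eq_mul, mul_comm]

open LineDeriv in
/-- The partial derivative `∂_i` of a Schwartz function, as a Schwartz function. -/
noncomputable def pdS (i : Fin 3) (F : SchwartzMap E3 ℝ) : SchwartzMap E3 ℝ :=
  ∂_{EuclideanSpace.single i (1:ℝ)} F

lemma pdS_apply (i : Fin 3) (F : SchwartzMap E3 ℝ) (v : E3) : pdS i F v = pd i F v :=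
  SchwartzMap.lineDerivOp_apply_eq_fderiv _ _ _

lemma coe_pdS (i : Fin 3) (F : SchwartzMap E3 ℝ) : ⇑(pdS i F) = pd i F :=
  funext (pdS_apply i F)

lemma coe_wS (s : ℝ) (F : SchwartzMap E3 ℝ) : ⇑(wS s F) = fun v => F v * jap v ^ s :=
  funext (wS_apply s F)

lemma pd_mul {u w : E3 → ℝ} (hu : Differentiable ℝ u) (hw : Differentiable ℝ w) (i : Fin 3)
    (v : E3) : pd i (fun v => u v * w v) v = pd i u v * w v + u v * pd i w v := by
  rw [pd, fderiv_fun_mul (hu v) (hw v)]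
  simp [pd]; ring

lemma pd_wS (s : ℝ) (F : SchwartzMap E3 ℝ) (i : Fin 3) (v : E3) :
    pd i (wS s F) v = pd i F v * jap v ^ s + F v * (s * v i * jap v ^ (s - 2)) := by
  rw [coe_wS, pd_mul F.differentiable (jap_rpow_differentiable s), pd_jap]

/-- Schwartz functions decay faster than every power of the Japanese bracket. -/
lemma schwartz_decay {V : Type*} [NormedAddCommGroup V] [NormedSpace ℝ V]
    (F : SchwartzMap E3 V) (s : ℝ) : ∃ C, 0 ≤ C ∧ ∀ v, ‖F v‖ ≤ C * jap v ^ (-s) := by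
  refine ⟨SchwartzMap.seminorm ℝ 0 0 (SchwartzMap.smulLeftCLM V (fun v : E3 => jap v ^ s) F),
    apply_nonneg _ _, fun v => ?_⟩
  have h := SchwartzMap.norm_le_seminorm ℝ
    (SchwartzMap.smulLeftCLM V (fun v : E3 => jap v ^ s) F) v
  have hp := Real.rpow_pos_of_pos (jap_pos v) s
  rw [SchwartzMap.smulLeftCLM_apply_apply (jap_tg s), norm_smul, Real.norm_eq_abs,
    abs_of_pos hp] at h
  rw [Real.rpow_neg (jap_pos v).le, ← div_eq_mul_inv, le_div_iff₀ hp, mul_comm]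
  exact h

lemma schwartz_mul_integrable (F G : SchwartzMap E3 ℝ) : Integrable (fun v => F v * G v) := by
  have := (SchwartzMap.pairing (ContinuousLinearMap.mul ℝ ℝ) F G).integrable (μ := volume)
  exact this

/-- A bounded measurable function times a Schwartz function is integrable. -/
lemma bdd_mul_integrable {u : E3 → ℝ} (hu : AEStronglyMeasurable u volume) {C : ℝ}
    (hC : ∀ v, |u v| ≤ C) (F : SchwartzMap E3 ℝ) : Integrable (fun v => u v * F v) :=
  F.integrable.bdd_mul hu (Filter.Eventually.of_forall hC)

/-! ### Convolution with singular kernels -/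

lemma ball_integrable :
    Integrable (fun z : E3 => (Set.Iic (1:ℝ)).indicator (fun y => (y ^ 2)⁻¹) ‖z‖) := by
  rw [integrable_fun_norm_addHaar (μ := (volume : Measure E3))
    (f := (Set.Iic (1:ℝ)).indicator (fun y => (y ^ 2)⁻¹))]
  have h1 : IntegrableOn (fun y : ℝ => (Set.Iic (1:ℝ)).indicator (fun _ => (1:ℝ)) y)
      (Set.Ioi 0) := by
    rw [IntegrableOn, integrable_indicator_iff measurableSet_Iic, IntegrableOn,
      Measure.restrict_restrict measurableSet_Iic]
    have : Set.Iic (1:ℝ) ∩ Set.Ioi 0 = Set.Ioc 0 1 := by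
      ext x; simp [and_comm]
    rw [this]
    exact integrable_const _
  refine h1.congr_fun (fun y hy => ?_) measurableSet_Ioi
  have hy : (0:ℝ) < y := hy
  have hd : Module.finrank ℝ E3 = 3 := by simp
  by_cases h : y ≤ 1
  · simp [Set.indicator, h, hd]; field_simp
  · simp [Set.indicator, h]

lemma jap_integrable {s : ℝ} (hs : 3 < s) : Integrable (fun w : E3 => jap w ^ (-s)) := by
  rw [jap_rpow_eq]
  exact integrable_rpow_neg_one_add_norm_sq (by simpa using hs)

/-- For `s > 3` the kernel `1 + |v - w|⁻²` has a bounded integral against `⟨w⟩^{-s}`, uniformly in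
the base point `v`. -/
lemma kernel_unif {s : ℝ} (hs : 3 < s) : ∃ C, 0 < C ∧ ∀ v : E3,
    Integrable (fun w : E3 => jap w ^ (-s) * (1 + (‖v - w‖ ^ 2)⁻¹)) ∧
    ∫ w : E3, jap w ^ (-s) * (1 + (‖v - w‖ ^ 2)⁻¹) ≤ C := by
  set χ : E3 → ℝ := fun z : E3 => (Set.Iic (1:ℝ)).indicator (fun y => (y ^ 2)⁻¹) ‖z‖ with hχ
  have hχ0 : ∀ z, 0 ≤ χ z := fun z => Set.indicator_nonneg (fun y _ => by positivity) _
  have hJ0 : ∀ w : E3, 0 ≤ jap w ^ (-s) := fun w => Real.rpow_nonneg (jap_pos w).le _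
  have hInt : ∀ v : E3, Integrable (fun w : E3 => 2 * jap w ^ (-s) + χ (v - w)) := fun v =>
    ((jap_integrable hs).const_mul 2).add (ball_integrable.comp_sub_left v)
  have hle : ∀ v w : E3, jap w ^ (-s) * (1 + (‖v - w‖ ^ 2)⁻¹) ≤ 2 * jap w ^ (-s) + χ (v - w) := by
    intro v w
    have h1 : jap w ^ (-s) ≤ 1 := Real.rpow_le_one_of_one_le_of_nonpos (one_le_jap w) (by linarith)
    by_cases h : ‖v - w‖ ≤ 1
    · have : χ (v - w) = (‖v - w‖ ^ 2)⁻¹ := by simp [hχ, Set.indicator, h]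
      rw [this]
      have h2 : 0 ≤ (‖v - w‖ ^ 2)⁻¹ := by positivity
      nlinarith [hJ0 w]
    · push Not at h
      have h2 : (‖v - w‖ ^ 2)⁻¹ ≤ 1 := inv_le_one_of_one_le₀ (by nlinarith)
      nlinarith [hJ0 w, hχ0 (v - w)]
  have hmeas : ∀ v : E3, AEStronglyMeasurable
      (fun w : E3 => jap w ^ (-s) * (1 + (‖v - w‖ ^ 2)⁻¹)) volume := by
    intro v
    apply Measurable.aestronglyMeasurable
    have := (jap_rpow_continuous (-s)).measurable
    fun_prop
  have hI : ∀ v : E3, Integrable (fun w : E3 => jap w ^ (-s) * (1 + (‖v - w‖ ^ 2)⁻¹)) := by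
    intro v
    refine (hInt v).mono' (hmeas v) (Filter.Eventually.of_forall fun w => ?_)
    rw [Real.norm_of_nonneg (mul_nonneg (hJ0 w) (by positivity))]
    exact hle v w
  refine ⟨(∫ w : E3, 2 * jap w ^ (-s)) + (∫ z, χ z) + 1, ?_, fun v => ⟨hI v, ?_⟩⟩
  · have h1 : 0 ≤ ∫ w : E3, 2 * jap w ^ (-s) := integral_nonneg fun w => by
      have := hJ0 w; positivity
    have h2 : 0 ≤ ∫ z, χ z := integral_nonneg hχ0
    linarith
  · calc _ ≤ ∫ w : E3, (2 * jap w ^ (-s) + χ (v - w)) := integral_mono (hI v) (hInt v) (hle v)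
      _ = (∫ w : E3, 2 * jap w ^ (-s)) + ∫ w, χ (v - w) :=
        integral_add ((jap_integrable hs).const_mul 2) (ball_integrable.comp_sub_left v)
      _ = (∫ w : E3, 2 * jap w ^ (-s)) + ∫ z, χ z := by rw [integral_sub_left_eq_self χ volume v]
      _ ≤ _ := by linarith

/-- The convolution `κ * G`. -/
noncomputable def cv (κ G : E3 → ℝ) (v : E3) : ℝ := ∫ w, κ (v - w) * G w

/-- Admissible kernels: measurable, with singularity at most `|z|⁻²` and bounded at infinity. -/
def Ker (κ : E3 → ℝ) : Prop := Measurable κ ∧ ∃ C, 0 ≤ C ∧ ∀ z, |κ z| ≤ C * (1 + (‖z‖ ^ 2)⁻¹)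

lemma cv_dom {κ : E3 → ℝ} (hκ : Ker κ) (G : SchwartzMap E3 ℝ) : ∃ C, 0 ≤ C ∧ ∀ v w : E3,
    |κ (v - w) * G w| ≤ C * (jap w ^ (-(4:ℝ)) * (1 + (‖v - w‖ ^ 2)⁻¹)) := by
  obtain ⟨hm, C, hC, hb⟩ := hκ
  obtain ⟨D, hD, hd⟩ := schwartz_decay G 4
  refine ⟨C * D, by positivity, fun v w => ?_⟩
  rw [abs_mul]
  calc |κ (v - w)| * |G w| ≤ (C * (1 + (‖v - w‖ ^ 2)⁻¹)) * (D * jap w ^ (-(4:ℝ))) :=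
        mul_le_mul (hb _) (hd w) (abs_nonneg _) (by positivity)
    _ = _ := by ring

lemma cv_integrable {κ : E3 → ℝ} (hκ : Ker κ) (G : SchwartzMap E3 ℝ) (v : E3) :
    Integrable (fun w => κ (v - w) * G w) := by
  obtain ⟨C, hC, h⟩ := cv_dom hκ G
  obtain ⟨_, _, hK⟩ := kernel_unif (s := 4) (by norm_num)
  refine ((hK v).1.const_mul C).mono' ?_ (Filter.Eventually.of_forall fun w => h v w)
  have := hκ.1
  have := G.continuous.measurable
  apply Measurable.aestronglyMeasurable
  fun_prop

lemma cv_bdd {κ : E3 → ℝ} (hκ : Ker κ) (G : SchwartzMap E3 ℝ) :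
    ∃ C, ∀ v, |cv κ G v| ≤ C := by
  obtain ⟨C, hC, h⟩ := cv_dom hκ G
  obtain ⟨D, _, hK⟩ := kernel_unif (s := 4) (by norm_num)
  refine ⟨C * D, fun v => ?_⟩
  unfold cv
  rw [← Real.norm_eq_abs]
  calc ‖∫ w, κ (v - w) * G w‖ ≤ ∫ w, C * (jap w ^ (-(4:ℝ)) * (1 + (‖v - w‖ ^ 2)⁻¹)) :=
        norm_integral_le_of_norm_le ((hK v).1.const_mul C)
          (Filter.Eventually.of_forall fun w => h v w)
    _ ≤ C * D := by
        rw [integral_const_mul]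
        exact mul_le_mul_of_nonneg_left (hK v).2 hC

lemma cv_comm (κ G : E3 → ℝ) (v : E3) : cv κ G v = ∫ z, κ z * G (v - z) := by
  rw [cv, ← integral_sub_left_eq_self (fun z => κ z * G (v - z)) volume v]
  simp

/-- Convolutions with admissible kernels are differentiable, the derivative falling on the Schwartz
factor. -/
lemma cv_hasFDerivAt {κ : E3 → ℝ} (hκ : Ker κ) (G : SchwartzMap E3 ℝ) (v : E3) :
    Integrable (fun z => κ z • fderiv ℝ G (v - z)) ∧
    HasFDerivAt (cv κ G) (∫ z, κ z • fderiv ℝ G (v - z)) v := by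
  have hcm : Continuous (fderiv ℝ G) := (SchwartzMap.fderivCLM ℝ E3 ℝ G).continuous
  have hGm := G.continuous.measurable
  obtain ⟨hm, C, hC, hb⟩ := hκ
  obtain ⟨D, hD, hd⟩ := schwartz_decay (SchwartzMap.fderivCLM ℝ E3 ℝ G) 4
  obtain ⟨_, _, hK⟩ := kernel_unif (s := 4) (by norm_num)
  have hbi : Integrable (fun z : E3 => (C * (D * 2 ^ (4:ℝ))) *
      (jap (v - z) ^ (-(4:ℝ)) * (1 + (‖z‖ ^ 2)⁻¹))) := by
    have := ((hK v).1.comp_sub_left v).const_mul (C * (D * 2 ^ (4:ℝ)))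
    simpa using this
  have hbd : ∀ z : E3, ∀ x ∈ Metric.ball v 1, ‖κ z • fderiv ℝ G (x - z)‖ ≤
      (C * (D * 2 ^ (4:ℝ))) * (jap (v - z) ^ (-(4:ℝ)) * (1 + (‖z‖ ^ 2)⁻¹)) := by
    intro z x hx
    have h1 : jap (v - z) ≤ 2 * jap (x - z) := by
      have h2 := jap_le_add (v - z) (x - z)
      have h3 : ‖v - z - (x - z)‖ ≤ 1 := by
        rw [sub_sub_sub_cancel_right, norm_sub_rev, ← dist_eq_norm]
        exact (Metric.mem_ball.1 hx).le
      linarith [one_le_jap (x - z)]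
    have h4 : jap (x - z) ^ (-(4:ℝ)) ≤ 2 ^ (4:ℝ) * jap (v - z) ^ (-(4:ℝ)) := by
      rw [Real.rpow_neg (jap_pos _).le, Real.rpow_neg (jap_pos _).le, ← div_eq_mul_inv,
        le_div_iff₀ (Real.rpow_pos_of_pos (jap_pos _) _), inv_mul_le_iff₀
        (Real.rpow_pos_of_pos (jap_pos _) _), mul_comm,
        ← Real.mul_rpow (by norm_num) (jap_pos _).le]
      exact Real.rpow_le_rpow (jap_pos _).le h1 (by norm_num)
    rw [norm_smul]
    have h5 : ‖fderiv ℝ G (x - z)‖ ≤ D * jap (x - z) ^ (-(4:ℝ)) := hd (x - z)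
    calc ‖κ z‖ * ‖fderiv ℝ G (x - z)‖
        ≤ (C * (1 + (‖z‖ ^ 2)⁻¹)) * (D * (2 ^ (4:ℝ) * jap (v - z) ^ (-(4:ℝ)))) :=
          mul_le_mul (hb z) (h5.trans (mul_le_mul_of_nonneg_left h4 hD)) (norm_nonneg _)
            (by positivity)
      _ = _ := by ring
  have hF'm : AEStronglyMeasurable (fun z => κ z • fderiv ℝ G (v - z)) volume :=
    hm.aestronglyMeasurable.smul
      (hcm.comp (continuous_const.sub continuous_id)).aestronglyMeasurable
  refine ⟨hbi.mono' hF'm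
    (Filter.Eventually.of_forall fun z => hbd z v (Metric.mem_ball_self one_pos)), ?_⟩
  rw [show cv κ G = fun v => ∫ z, κ z * G (v - z) from funext (cv_comm κ G)]
  refine hasFDerivAt_integral_of_dominated_of_fderiv_le (s := Metric.ball v 1)
    (F' := fun x z => κ z • fderiv ℝ G (x - z))
    (Metric.ball_mem_nhds v one_pos) ?_ ?_ hF'm (Filter.Eventually.of_forall hbd) hbi ?_
  · refine Filter.Eventually.of_forall fun x => Measurable.aestronglyMeasurable ?_
    fun_prop
  · have := (cv_integrable ⟨hm, C, hC, hb⟩ G v).comp_sub_left v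
    simpa using this
  · refine Filter.Eventually.of_forall fun z x _ => ?_
    have h := (G.hasFDerivAt (x - z)).comp x ((hasFDerivAt_id x).sub_const z)
    exact (h.const_smul (κ z))

lemma cv_differentiable {κ : E3 → ℝ} (hκ : Ker κ) (G : SchwartzMap E3 ℝ) :
    Differentiable ℝ (cv κ G) := fun v => (cv_hasFDerivAt hκ G v).2.differentiableAt

lemma pd_cv {κ : E3 → ℝ} (hκ : Ker κ) (G : SchwartzMap E3 ℝ) (i : Fin 3) (v : E3) :
    pd i (cv κ G) v = cv κ (pdS i G) v := by
  obtain ⟨h1, h2⟩ := cv_hasFDerivAt hκ G v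
  rw [pd, h2.fderiv, ContinuousLinearMap.integral_apply h1, cv_comm]
  simp [pdS_apply, pd]

/-- Integration by parts inside a convolution with a smooth kernel. -/
lemma cv_ibp {κ : E3 → ℝ} (hκ : Differentiable ℝ κ) (i : Fin 3) {C : ℝ} (h0 : ∀ z, |κ z| ≤ C)
    (h1 : ∀ z, |pd i κ z| ≤ C) (G : SchwartzMap E3 ℝ) (v : E3) :
    cv κ (pdS i G) v = cv (pd i κ) G v := by
  have hpm : Measurable (pd i κ) := measurable_fderiv_apply_const ℝ κ _
  have hfd : ∀ w, fderiv ℝ (fun w => κ (v - w)) w (EuclideanSpace.single i 1) =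
      - pd i κ (v - w) := by
    intro w
    have h := (hκ (v - w)).hasFDerivAt.comp w ((hasFDerivAt_id w).const_sub v)
    have h' : HasFDerivAt (fun w => κ (v - w)) _ w := h
    rw [h'.fderiv]; simp [pd]
  have hd : Differentiable ℝ (fun w => κ (v - w)) := by fun_prop
  have h := integral_mul_fderiv_eq_neg_fderiv_mul_of_integrable (μ := volume)
    (f := fun w => κ (v - w)) (g := G) (v := EuclideanSpace.single i (1:ℝ)) ?_ ?_ ?_
    (fun x _ => hd x) (fun x _ => G.differentiable x)
  · simp only [hfd, neg_mul, integral_neg, neg_neg] at h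
    simp only [cv, pdS_apply]
    exact h
  · simp only [hfd]
    refine bdd_mul_integrable (C := C) ?_ (fun w => by rw [abs_neg]; exact h1 _) G
    apply Measurable.aestronglyMeasurable; fun_prop
  · have := bdd_mul_integrable (C := C) (u := fun w => κ (v - w)) hd.continuous.aestronglyMeasurable
      (fun w => h0 _) (pdS i G)
    simp only [pdS_apply] at this
    exact this
  · exact bdd_mul_integrable (C := C) (u := fun w => κ (v - w)) hd.continuous.aestronglyMeasurable
      (fun w => h0 _) G

/-! ### Hardy's inequality -/

lemma sq_integrable (u : SchwartzMap E3 ℝ) : Integrable (fun v => u v ^ 2) := by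
  simpa [sq] using schwartz_mul_integrable u u

/-- The coordinate functions have partial derivatives `δ_ij`. -/
lemma pd_coord (i j : Fin 3) (v : E3) : pd i (fun v => v j) v = if i = j then 1 else 0 := by
  have h : HasFDerivAt (fun v : E3 => v j) (EuclideanSpace.proj j : E3 →L[ℝ] ℝ) v :=
    (EuclideanSpace.proj j : E3 →L[ℝ] ℝ).hasFDerivAt
  rw [pd, h.fderiv]
  simp [eq_comm]

lemma coord_differentiable (j : Fin 3) : Differentiable ℝ (fun v : E3 => v j) :=
  (EuclideanSpace.proj j : E3 →L[ℝ] ℝ).differentiable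

lemma pd_rpow (c : ℝ) (hc : 0 < c) (s : ℝ) (i : Fin 3) (v : E3) :
    pd i (fun w : E3 => (c + ‖w‖ ^ 2) ^ s) v = 2 * s * v i * (c + ‖v‖ ^ 2) ^ (s - 1) := by
  rw [pd, (hasFDerivAt_rpow c hc s v).fderiv]
  simp only [smul_apply, innerSL_single, smul_eq_mul, nsmul_eq_mul]
  push_cast; ring

lemma rpow_differentiable (c : ℝ) (hc : 0 < c) (s : ℝ) :
    Differentiable ℝ (fun w : E3 => (c + ‖w‖ ^ 2) ^ s) :=
  fun v => (hasFDerivAt_rpow c hc s v).differentiableAt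

/-- Regularised Hardy inequality. The vector field `x/(|x|²+ε)` has divergence at least
`1/(|x|²+ε)`; integrate it by parts against `u²` and absorb. -/
lemma hardy_eps (u : SchwartzMap E3 ℝ) (ε : ℝ) (hε : 0 < ε) :
    ∫ v, u v ^ 2 * (ε + ‖v‖ ^ 2)⁻¹ ≤ 4 * ∫ v, ∑ i, pd i u v ^ 2 := by
  set κ : Fin 3 → E3 → ℝ := fun i v => v i * (ε + ‖v‖ ^ 2) ^ (-1 : ℝ) with hκ
  have hρ : ∀ v : E3, 0 < ε + ‖v‖ ^ 2 := fun v => by positivity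
  have hκd : ∀ i, Differentiable ℝ (κ i) := fun i =>
    (coord_differentiable i).mul (rpow_differentiable ε hε (-1))
  have hpκ : ∀ i v, pd i (κ i) v = (ε + ‖v‖ ^ 2)⁻¹ - 2 * v i ^ 2 * ((ε + ‖v‖ ^ 2)⁻¹) ^ 2 := by
    intro i v
    rw [hκ, pd_mul (coord_differentiable i) (rpow_differentiable ε hε (-1)), pd_coord,
      pd_rpow ε hε, Real.rpow_neg_one, show (-1 - 1 : ℝ) = -(2:ℕ) by norm_num,
      Real.rpow_neg (hρ v).le, Real.rpow_natCast, ← inv_pow]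
    simp; ring
  have hκe : ∀ i v, κ i v = v i * (ε + ‖v‖ ^ 2)⁻¹ := fun i v => by rw [hκ]; simp [Real.rpow_neg_one]
  have hinv : ∀ v : E3, (ε + ‖v‖ ^ 2)⁻¹ ≤ ε⁻¹ := fun v =>
    inv_anti₀ hε (by nlinarith [sq_nonneg ‖v‖])
  have hvi : ∀ (v : E3) i, v i ^ 2 * (ε + ‖v‖ ^ 2)⁻¹ ≤ 1 := fun v i => by
    rw [← div_eq_mul_inv, div_le_one (hρ v)]
    have := abs_coord_le v i
    nlinarith [sq_abs (v i), abs_nonneg (v i)]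
  have hκb : ∀ i v, |κ i v| ≤ 1 + ε⁻¹ := fun i v => by
    have h1 := hvi v i
    have h3 : 0 < (ε + ‖v‖ ^ 2)⁻¹ := inv_pos.2 (hρ v)
    rw [hκe, abs_mul, abs_of_pos h3]
    have := hinv v
    nlinarith [sq_nonneg (|v i| - 1), sq_abs (v i), abs_nonneg (v i)]
  have hpκb : ∀ i v, |pd i (κ i) v| ≤ 2 * ε⁻¹ := fun i v => by
    have h1 := hvi v i
    have h3 : 0 < (ε + ‖v‖ ^ 2)⁻¹ := inv_pos.2 (hρ v)
    have h4 := hinv v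
    have h5 : 0 ≤ v i ^ 2 * (ε + ‖v‖ ^ 2)⁻¹ := by positivity
    rw [hpκ, abs_le]
    constructor <;> nlinarith
  have hρm : ∀ i, AEStronglyMeasurable (pd i (κ i)) volume := fun i =>
    (measurable_fderiv_apply_const ℝ (κ i) _).aestronglyMeasurable
  let U : SchwartzMap E3 ℝ := SchwartzMap.pairing (ContinuousLinearMap.mul ℝ ℝ) u u
  have hU : ∀ v, U v = u v ^ 2 := fun v => by
    simp [U, SchwartzMap.pairing_apply_apply, sq]
  have hUc : ⇑U = fun v => u v * u v := funext fun v => by rw [hU, sq]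
  have hpU : ∀ i v, pd i U v = 2 * (u v * pd i u v) := fun i v => by
    rw [hUc, pd_mul u.differentiable u.differentiable]; ring
  have hA : ∀ i, Integrable (fun v => pd i (κ i) v * U v) := fun i =>
    bdd_mul_integrable (hρm i) (hpκb i) U
  have hB : ∀ i, Integrable (fun v => κ i v * pd i U v) := fun i => by
    have := bdd_mul_integrable (hκd i).continuous.aestronglyMeasurable (hκb i) (pdS i U)
    simpa only [pdS_apply] using this
  have hibp : ∀ i, ∫ v, κ i v * pd i U v = - ∫ v, pd i (κ i) v * U v := fun i =>
    integral_mul_fderiv_eq_neg_fderiv_mul_of_integrable (hA i) (hB i)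
      (bdd_mul_integrable (hκd i).continuous.aestronglyMeasurable (hκb i) U)
      (fun x _ => hκd i x) (fun x _ => U.differentiable x)
  have hsum : ∫ v, ∑ i, pd i (κ i) v * U v = - ∫ v, ∑ i, κ i v * pd i U v := by
    rw [integral_finsetSum _ fun i _ => hA i, integral_finsetSum _ fun i _ => hB i,
      ← Finset.sum_neg_distrib]
    exact Finset.sum_congr rfl fun i _ => by rw [hibp i, neg_neg]
  have hIu : Integrable (fun v => u v ^ 2 * (ε + ‖v‖ ^ 2)⁻¹) := by
    have : Integrable (fun v => (ε + ‖v‖ ^ 2)⁻¹ * U v) := by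
      refine bdd_mul_integrable (C := ε⁻¹) (Measurable.aestronglyMeasurable (by fun_prop))
        (fun v => ?_) U
      rw [abs_of_pos (inv_pos.2 (hρ v))]; exact hinv v
    refine this.congr (Filter.Eventually.of_forall fun v => ?_)
    simp only [hU]; ring
  have hID : Integrable (fun v => ∑ i, pd i u v ^ 2) :=
    integrable_finsetSum _ fun i _ => by simpa only [pdS_apply] using sq_integrable (pdS i u)
  have h1 : ∫ v, u v ^ 2 * (ε + ‖v‖ ^ 2)⁻¹ ≤ ∫ v, ∑ i, pd i (κ i) v * U v := by
    refine integral_mono hIu (integrable_finsetSum _ fun i _ => hA i) fun v => ?_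
    simp only [hpκ, hU]
    have h3 : 0 < (ε + ‖v‖ ^ 2)⁻¹ := inv_pos.2 (hρ v)
    have h4 : ‖v‖ ^ 2 * (ε + ‖v‖ ^ 2)⁻¹ ≤ 1 := by
      rw [← div_eq_mul_inv, div_le_one (hρ v)]; linarith
    have h5 := norm_sq_eq v
    simp only [Fin.sum_univ_three] at h5 ⊢
    set r := (ε + ‖v‖ ^ 2)⁻¹
    have h6 : 0 ≤ (1 - ‖v‖ ^ 2 * r) * r * u v ^ 2 := by
      have : 0 ≤ 1 - ‖v‖ ^ 2 * r := by linarith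
      positivity
    rw [h5] at h6
    nlinarith
  -- Young's inequality with the weights `1/2` and `2`, so that the first term can be absorbed
  have h2 : - ∫ v, ∑ i, κ i v * pd i U v ≤
      ∫ v, (1/2 * (u v ^ 2 * (ε + ‖v‖ ^ 2)⁻¹) + 2 * ∑ i, pd i u v ^ 2) := by
    rw [← integral_neg]
    refine integral_mono (integrable_finsetSum _ fun i _ => hB i).neg
      ((hIu.const_mul _).add (hID.const_mul _)) fun v => ?_
    simp only [hpU, hκe]
    have h3 : 0 < (ε + ‖v‖ ^ 2)⁻¹ := inv_pos.2 (hρ v)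
    have h4 : ‖v‖ ^ 2 * (ε + ‖v‖ ^ 2)⁻¹ ≤ 1 := by
      rw [← div_eq_mul_inv, div_le_one (hρ v)]; linarith
    have h5 := norm_sq_eq v
    simp only [Fin.sum_univ_three] at h5 ⊢
    set r := (ε + ‖v‖ ^ 2)⁻¹
    have h6 : 0 ≤ (1 - ‖v‖ ^ 2 * r) * r * u v ^ 2 := by
      have : 0 ≤ 1 - ‖v‖ ^ 2 * r := by linarith
      positivity
    rw [h5] at h6
    nlinarith [sq_nonneg (v 0 * r * u v + 2 * pd 0 u v), sq_nonneg (v 1 * r * u v + 2 * pd 1 u v),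
      sq_nonneg (v 2 * r * u v + 2 * pd 2 u v)]
  rw [integral_add (hIu.const_mul _) (hID.const_mul _), integral_const_mul,
    integral_const_mul] at h2
  linarith

lemma sq_kernel_integrable (u : SchwartzMap E3 ℝ) (a : E3) :
    Integrable (fun v => u v ^ 2 * (‖v - a‖ ^ 2)⁻¹) := by
  have hk : Ker (fun z : E3 => (‖z‖ ^ 2)⁻¹) :=
    ⟨by fun_prop, 1, by norm_num, fun z => by rw [abs_of_nonneg (by positivity)]; linarith⟩
  have := cv_integrable hk (SchwartzMap.pairing (ContinuousLinearMap.mul ℝ ℝ) u u) a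
  refine this.congr (Filter.Eventually.of_forall fun v => ?_)
  simp [SchwartzMap.pairing_apply_apply, norm_sub_rev a v]; ring

/-- Hardy's inequality in dimension three, centred at the origin. -/
lemma hardy_zero (u : SchwartzMap E3 ℝ) :
    ∫ v, u v ^ 2 * (‖v‖ ^ 2)⁻¹ ≤ 4 * ∫ v, ∑ i, pd i u v ^ 2 := by
  have hI := sq_kernel_integrable u 0
  simp only [sub_zero] at hI
  have hlim : Filter.Tendsto (fun n : ℕ => ∫ v, u v ^ 2 * (1 / ((n:ℝ) + 1) + ‖v‖ ^ 2)⁻¹)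
      Filter.atTop (nhds (∫ v, u v ^ 2 * (‖v‖ ^ 2)⁻¹)) := by
    have hum := u.continuous.measurable
    refine tendsto_integral_of_dominated_convergence (fun v => u v ^ 2 * (‖v‖ ^ 2)⁻¹)
      (fun n => Measurable.aestronglyMeasurable (by fun_prop)) hI (fun n => ?_) ?_
    · filter_upwards [Measure.ae_ne volume (0:E3)] with v hv
      have hv' : 0 < ‖v‖ := norm_pos_iff.2 hv
      rw [Real.norm_of_nonneg (by positivity)]
      have : (0:ℝ) < 1 / ((n:ℝ) + 1) := by positivity
      gcongr
      linarith
    · filter_upwards [Measure.ae_ne volume (0:E3)] with v hv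
      have hv' : 0 < ‖v‖ := norm_pos_iff.2 hv
      refine Filter.Tendsto.const_mul _ ?_
      refine Filter.Tendsto.inv₀ ?_ (by positivity)
      simpa using (tendsto_one_div_add_atTop_nhds_zero_nat (𝕜 := ℝ)).add_const (‖v‖ ^ 2)
  exact le_of_tendsto' hlim fun n => hardy_eps u _ (by positivity)

/-- Hardy's inequality in dimension three. -/
lemma hardy (u : SchwartzMap E3 ℝ) (a : E3) :
    ∫ v, u v ^ 2 * (‖v - a‖ ^ 2)⁻¹ ≤ 4 * ∫ v, ∑ i, pd i u v ^ 2 := by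
  let w : SchwartzMap E3 ℝ := SchwartzMap.compSubConstCLM ℝ (-a) u
  have hw : ⇑w = fun v => u (v + a) := funext fun v => by simp [w]
  have hp : ∀ i v, pd i w v = pd i u (v + a) := fun i v => by
    rw [hw, pd, pd, fderiv_comp_add_right]
  have h := hardy_zero w
  simp only [hp] at h
  rw [hw] at h
  rw [← integral_add_right_eq_self (fun v => u v ^ 2 * (‖v - a‖ ^ 2)⁻¹) a,
    ← integral_add_right_eq_self (fun v => ∑ i, pd i u v ^ 2) a]
  simpa using h

/-! ### The Landau kernel and its drift -/

/-- `q_ε(z) = (ε + |z|²)^{-1/2}`; `ε = 0` gives `|z|⁻¹` and `ε = 1` gives `⟨z⟩⁻¹`. -/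
noncomputable def qe (ε : ℝ) (z : E3) : ℝ := (Real.sqrt (ε + ‖z‖ ^ 2))⁻¹

lemma qe_zero (z : E3) : qe 0 z = ‖z‖⁻¹ := by simp [qe]

lemma qe_one (z : E3) : qe 1 z = (jap z)⁻¹ := rfl

lemma qe_nonneg (ε : ℝ) (z : E3) : 0 ≤ qe ε z := inv_nonneg.2 (Real.sqrt_nonneg _)

lemma qe_rpow {ε : ℝ} (hε : 0 < ε) (z : E3) (n : ℕ) :
    (ε + ‖z‖ ^ 2) ^ (-(n:ℝ) / 2) = qe ε z ^ n := by
  have h : 0 < ε + ‖z‖ ^ 2 := by positivity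
  rw [qe]
  generalize ε + ‖z‖ ^ 2 = r at h
  rw [Real.sqrt_eq_rpow, ← Real.rpow_neg h.le, ← Real.rpow_natCast, ← Real.rpow_mul h.le]
  congr 1; ring

lemma qe_pow_differentiable {ε : ℝ} (hε : 0 < ε) (n : ℕ) :
    Differentiable ℝ (fun z => qe ε z ^ n) := by
  rw [show (fun z => qe ε z ^ n) = fun z : E3 => (ε + ‖z‖ ^ 2) ^ (-(n:ℝ) / 2) from
    funext fun z => (qe_rpow hε z n).symm]
  exact rpow_differentiable ε hε _

lemma pd_qe_pow {ε : ℝ} (hε : 0 < ε) (n : ℕ) (i : Fin 3) (z : E3) :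
    pd i (fun z => qe ε z ^ n) z = - n * z i * qe ε z ^ (n + 2) := by
  rw [show (fun z => qe ε z ^ n) = fun z : E3 => (ε + ‖z‖ ^ 2) ^ (-(n:ℝ) / 2) from
    funext fun z => (qe_rpow hε z n).symm, pd_rpow ε hε, ← qe_rpow hε z (n + 2)]
  push_cast
  rw [show -(n:ℝ) / 2 - 1 = -((n:ℝ) + 2) / 2 by ring]
  ring

lemma norm_mul_qe_le {ε : ℝ} (hε : 0 ≤ ε) (z : E3) : ‖z‖ * qe ε z ≤ 1 := by
  rw [qe, ← div_eq_mul_inv]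
  refine div_le_one_of_le₀ (Real.le_sqrt_of_sq_le (by linarith)) (Real.sqrt_nonneg _)

lemma coord_mul_qe_le {ε : ℝ} (hε : 0 ≤ ε) (z : E3) (i : Fin 3) : |z i * qe ε z| ≤ 1 := by
  rw [abs_mul, abs_of_nonneg (qe_nonneg _ _)]
  exact (mul_le_mul_of_nonneg_right (abs_coord_le z i) (qe_nonneg _ _)).trans (norm_mul_qe_le hε z)

lemma qe_le {ε : ℝ} (hε : 0 ≤ ε) {z : E3} (hz : z ≠ 0) : qe ε z ≤ ‖z‖⁻¹ := by
  have : 0 < ‖z‖ := norm_pos_iff.2 hz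
  exact inv_anti₀ this (Real.le_sqrt_of_sq_le (by linarith))

lemma qe_le' {ε : ℝ} (hε : 0 < ε) (z : E3) : qe ε z ≤ (Real.sqrt ε)⁻¹ :=
  inv_anti₀ (Real.sqrt_pos.2 hε) (Real.sqrt_le_sqrt (by nlinarith [sq_nonneg ‖z‖]))

@[fun_prop]
lemma qe_measurable (ε : ℝ) : Measurable (qe ε) := by unfold qe; fun_prop

lemma coord_measurable (i : Fin 3) : Measurable (fun z : E3 => z i) :=
  (coord_differentiable i).continuous.measurable

/-- Regularised Landau kernel `δ_ij q_ε − z_i z_j q_ε³`. -/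
noncomputable def aE (ε : ℝ) (i j : Fin 3) (z : E3) : ℝ :=
  (if i = j then 1 else 0) * qe ε z - z i * z j * qe ε z ^ 3

/-- The partial derivative `∂_j` of the regularised Landau kernel `aE ε i j`. -/
noncomputable def cE (ε : ℝ) (i j : Fin 3) (z : E3) : ℝ :=
  (if i = j then 1 else 0) * (- z j * qe ε z ^ 3) -
    (((if i = j then 1 else 0) * z j + z i) * qe ε z ^ 3 - 3 * (z i * z j) * z j * qe ε z ^ 5)

/-- The drift kernel `b_i = Σ_j ∂_j a_ij = −2 z_i |z|⁻³` for `ε = 0`, and its regularisation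
`−2 z_i ⟨z⟩⁻³` for `ε = 1`. -/
noncomputable def bE (ε : ℝ) (i : Fin 3) (z : E3) : ℝ := -2 * z i * qe ε z ^ 3

lemma aE_zero (i j : Fin 3) (z : E3) : aE 0 i j z = aK z i j := by
  simp only [aE, aK, Pi3, Matrix.of_apply, qe_zero]
  rw [div_eq_mul_inv, ← inv_pow]; ring

lemma aE_differentiable {ε : ℝ} (hε : 0 < ε) (i j : Fin 3) : Differentiable ℝ (aE ε i j) := by
  have h1 := qe_pow_differentiable hε 1
  have h3 := qe_pow_differentiable hε 3
  have hi := coord_differentiable i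
  have hj := coord_differentiable j
  simp only [pow_one] at h1
  unfold aE
  fun_prop

lemma pd_aE {ε : ℝ} (hε : 0 < ε) (i j : Fin 3) (z : E3) : pd j (aE ε i j) z = cE ε i j z := by
  have h1 := qe_pow_differentiable hε 1
  have h3 := qe_pow_differentiable hε 3
  have hi := coord_differentiable i
  have hj := coord_differentiable j
  have hij : Differentiable ℝ (fun z : E3 => z i * z j) := hi.mul hj
  have e1 := pd_qe_pow hε 1 j z
  have e3 := pd_qe_pow hε 3 j z
  simp only [pow_one] at h1 e1
  have ha := pd_mul (differentiable_const (if i = j then (1:ℝ) else 0)) h1 j z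
  have hb := pd_mul hij h3 j z
  have hc := pd_mul hi hj j z
  rw [pd_coord, pd_coord] at hc
  have h0 : pd j (fun _ : E3 => (if i = j then (1:ℝ) else 0)) z = 0 := by simp [pd]
  have hs : pd j (aE ε i j) z = pd j (fun z => (if i = j then (1:ℝ) else 0) * qe ε z) z -
      pd j (fun z => (z i * z j) * qe ε z ^ 3) z := by
    unfold aE pd
    have k1 : Differentiable ℝ (fun z : E3 => (if i = j then (1:ℝ) else 0) * qe ε z) :=
      h1.const_mul _
    have k2 : Differentiable ℝ (fun z : E3 => z i * z j * qe ε z ^ 3) := hij.mul h3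
    rw [fderiv_fun_sub (k1 z) (k2 z)]
    simp
  rw [hs, ha, hb, hc, h0, e1, e3, cE]
  simp only [eq_comm (a := j) (b := i)]
  push_cast
  simp
  ring

lemma aE_bound {ε : ℝ} (hε : 0 ≤ ε) (i j : Fin 3) (z : E3) : |aE ε i j z| ≤ 2 * qe ε z := by
  have hi := coord_mul_qe_le hε z i
  have hj := coord_mul_qe_le hε z j
  have hq := qe_nonneg ε z
  have h1 : |(if i = j then (1:ℝ) else 0) * qe ε z| ≤ qe ε z := by
    split_ifs <;> simp [abs_of_nonneg hq, hq]
  have h2 : |z i * z j * qe ε z ^ 3| ≤ qe ε z := by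
    rw [show z i * z j * qe ε z ^ 3 = (z i * qe ε z) * (z j * qe ε z) * qe ε z by ring, abs_mul,
      abs_mul, abs_of_nonneg hq]
    exact mul_le_of_le_one_left hq (mul_le_one₀ hi (abs_nonneg _) hj)
  unfold aE
  exact (abs_sub _ _).trans (by linarith)

lemma cE_bound {ε : ℝ} (hε : 0 ≤ ε) (i j : Fin 3) (z : E3) : |cE ε i j z| ≤ 6 * qe ε z ^ 2 := by
  have hi := coord_mul_qe_le hε z i
  have hj := coord_mul_qe_le hε z j
  have hq := qe_nonneg ε z
  set δ : ℝ := if i = j then 1 else 0 with hδ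
  have hδ1 : |δ| ≤ 1 := by rw [hδ]; split_ifs <;> simp
  set α := z i * qe ε z
  set β := z j * qe ε z
  have e : cE ε i j z = (-(2 * δ * β) - α + 3 * (α * β * β)) * qe ε z ^ 2 := by
    simp only [cE, ← hδ, α, β]; ring
  have h1 : |δ * β| ≤ 1 := by rw [abs_mul]; exact mul_le_one₀ hδ1 (abs_nonneg _) hj
  have h2 : |α * β * β| ≤ 1 := by
    rw [abs_mul, abs_mul]
    exact mul_le_one₀ (mul_le_one₀ hi (abs_nonneg _) hj) (abs_nonneg _) hj
  rw [e, abs_mul, abs_of_nonneg (sq_nonneg (qe ε z))]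
  refine mul_le_mul_of_nonneg_right ?_ (sq_nonneg _)
  rw [abs_le] at *
  constructor <;> linarith [h1.1, h1.2]

lemma sum_cE_zero (i : Fin 3) (z : E3) : ∑ j, cE 0 i j z = bE 0 i z := by
  have h : ‖z‖ ^ 2 * qe 0 z ^ 5 * z i = qe 0 z ^ 3 * z i := by
    by_cases hz : z = 0
    · simp [hz]
    · have : ‖z‖ ≠ 0 := norm_ne_zero_iff.2 hz
      rw [qe_zero]; field_simp
  rw [norm_sq_eq] at h
  simp only [Fin.sum_univ_three] at h
  fin_cases i <;> simp [cE, bE, Fin.sum_univ_three] <;> dsimp at h <;> linarith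

lemma qe_sq_zero (z : E3) : qe 0 z ^ 2 = (‖z‖ ^ 2)⁻¹ := by rw [qe_zero, inv_pow]

lemma aE_measurable (ε : ℝ) (i j : Fin 3) : Measurable (aE ε i j) := by
  have := coord_measurable i
  have := coord_measurable j
  unfold aE; fun_prop

lemma cE_measurable (ε : ℝ) (i j : Fin 3) : Measurable (cE ε i j) := by
  have := coord_measurable i
  have := coord_measurable j
  unfold cE; fun_prop

lemma bE_measurable (ε : ℝ) (i : Fin 3) : Measurable (bE ε i) := by
  have := coord_measurable i
  unfold bE; fun_prop

lemma bE_bound {ε : ℝ} (hε : 0 ≤ ε) (i : Fin 3) (z : E3) : |bE ε i z| ≤ 2 * qe ε z ^ 2 := by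
  have hi := coord_mul_qe_le hε z i
  rw [bE, show -2 * z i * qe ε z ^ 3 = (-2 * (z i * qe ε z)) * qe ε z ^ 2 by ring, abs_mul,
    abs_of_nonneg (sq_nonneg (qe ε z)), abs_mul]
  refine mul_le_mul_of_nonneg_right ?_ (sq_nonneg _)
  rw [show |(-2:ℝ)| = 2 by norm_num]; linarith

lemma ker_a (i j : Fin 3) : Ker (aE 0 i j) :=
  ⟨aE_measurable 0 i j, 2, by norm_num, fun z => (aE_bound le_rfl i j z).trans (by
    rw [← qe_sq_zero]; nlinarith [sq_nonneg (qe 0 z - 1), qe_nonneg 0 z])⟩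

lemma ker_c (i j : Fin 3) : Ker (cE 0 i j) :=
  ⟨cE_measurable 0 i j, 6, by norm_num, fun z => (cE_bound le_rfl i j z).trans (by
    rw [← qe_sq_zero]; linarith)⟩

lemma ker_b (i : Fin 3) : Ker (bE 0 i) :=
  ⟨bE_measurable 0 i, 2, by norm_num, fun z => (bE_bound le_rfl i z).trans (by
    rw [← qe_sq_zero]; linarith)⟩

lemma qe_one_le (z : E3) : qe 1 z ≤ 1 := inv_le_one_of_one_le₀ (one_le_jap z)

lemma ker_bf (i : Fin 3) : Ker (bE 1 i) :=
  ⟨bE_measurable 1 i, 2, by norm_num, fun z => (bE_bound zero_le_one i z).trans (by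
    rw [← qe_sq_zero]; nlinarith [qe_nonneg 1 z, qe_one_le z, sq_nonneg (qe 0 z)])⟩

/-- Dominated convergence for convolutions whose kernels converge away from the origin. -/
lemma cv_limit {κ : ℕ → E3 → ℝ} {κ' : E3 → ℝ} (hm : ∀ n, Measurable (κ n)) {C : ℝ}
    (hb : ∀ n z, z ≠ 0 → |κ n z| ≤ C * (1 + (‖z‖ ^ 2)⁻¹))
    (hl : ∀ z, z ≠ 0 → Filter.Tendsto (fun n => κ n z) Filter.atTop (nhds (κ' z)))
    (G : SchwartzMap E3 ℝ) (v : E3) :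
    Filter.Tendsto (fun n => cv (κ n) G v) Filter.atTop (nhds (cv κ' G v)) := by
  have hGm := G.continuous.measurable
  have hK : Ker (fun z : E3 => C * (1 + (‖z‖ ^ 2)⁻¹)) :=
    ⟨by fun_prop, |C|, abs_nonneg _, fun z => by
      rw [abs_mul, abs_of_nonneg (a := 1 + (‖z‖ ^ 2)⁻¹) (by positivity)]⟩
  refine tendsto_integral_of_dominated_convergence
    (fun w => ‖(C * (1 + (‖v - w‖ ^ 2)⁻¹)) * G w‖)
    (fun n => Measurable.aestronglyMeasurable ?_) (cv_integrable hK G v).norm (fun n => ?_) ?_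
  · have := hm n
    fun_prop
  · filter_upwards [Measure.ae_ne volume v] with w hw
    rw [norm_mul, norm_mul]
    refine mul_le_mul_of_nonneg_right ?_ (norm_nonneg _)
    exact (hb n _ (sub_ne_zero.2 (Ne.symm hw))).trans (le_abs_self _)
  · filter_upwards [Measure.ae_ne volume v] with w hw
    exact (hl _ (sub_ne_zero.2 (Ne.symm hw))).mul_const _

lemma qe_tendsto (z : E3) (hz : z ≠ 0) : Filter.Tendsto (fun n : ℕ => qe (1 / ((n:ℝ) + 1)) z)
    Filter.atTop (nhds (qe 0 z)) := by
  have hz' : 0 < ‖z‖ := norm_pos_iff.2 hz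
  unfold qe
  refine Filter.Tendsto.inv₀ ?_ (by simpa using hz'.ne')
  refine (Real.continuous_sqrt.tendsto _).comp ?_
  exact (tendsto_one_div_add_atTop_nhds_zero_nat (𝕜 := ℝ)).add_const (‖z‖ ^ 2)

/-- Integration by parts against the singular Landau kernel: `a_ij * ∂_j g = (∂_j a_ij) * g`,
obtained by removing the regularisation. -/
lemma cv_a_ibp (i j : Fin 3) (G : SchwartzMap E3 ℝ) (v : E3) :
    cv (aE 0 i j) (pdS j G) v = cv (cE 0 i j) G v := by
  have hε : ∀ n : ℕ, (0:ℝ) < 1 / ((n:ℝ) + 1) := fun n => by positivity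
  have hq2 : ∀ (n : ℕ) (z : E3), z ≠ 0 → qe (1 / ((n:ℝ) + 1)) z ^ 2 ≤ (‖z‖ ^ 2)⁻¹ := by
    intro n z hz
    rw [← inv_pow]
    exact pow_le_pow_left₀ (qe_nonneg _ _) (qe_le (hε n).le hz) 2
  have h1 : Filter.Tendsto (fun n : ℕ => cv (aE (1 / ((n:ℝ) + 1)) i j) (pdS j G) v) Filter.atTop
      (nhds (cv (aE 0 i j) (pdS j G) v)) := by
    refine cv_limit (fun n => aE_measurable _ i j) (C := 2) (fun n z hz => ?_) (fun z hz => ?_) _ v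
    · refine (aE_bound (hε n).le i j z).trans ?_
      have := hq2 n z hz
      nlinarith [sq_nonneg (qe (1 / ((n:ℝ) + 1)) z - 1)]
    · unfold aE
      have := qe_tendsto z hz
      exact (this.const_mul _).sub ((this.pow 3).const_mul _)
  have h2 : Filter.Tendsto (fun n : ℕ => cv (cE (1 / ((n:ℝ) + 1)) i j) G v) Filter.atTop
      (nhds (cv (cE 0 i j) G v)) := by
    refine cv_limit (fun n => cE_measurable _ i j) (C := 6) (fun n z hz => ?_) (fun z hz => ?_) _ v
    · refine (cE_bound (hε n).le i j z).trans ?_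
      have := hq2 n z hz
      linarith
    · unfold cE
      have := qe_tendsto z hz
      exact (((this.pow 3).const_mul _).const_mul _).sub
        (((this.pow 3).const_mul _).sub ((this.pow 5).const_mul _))
  refine tendsto_nhds_unique h1 (h2.congr fun n => ?_)
  have hpd : pd j (aE (1 / ((n:ℝ) + 1)) i j) = cE (1 / ((n:ℝ) + 1)) i j :=
    funext fun z => pd_aE (hε n) i j z
  rw [← hpd]
  set s := (Real.sqrt (1 / ((n:ℝ) + 1)))⁻¹
  refine (cv_ibp (aE_differentiable (hε n) i j) j (C := 2 * s + 6 * s ^ 2) (fun z => ?_)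
    (fun z => ?_) G v).symm
  · have := aE_bound (hε n).le i j z
    have h3 := qe_le' (hε n) z
    nlinarith [sq_nonneg s]
  · rw [hpd]
    have := cE_bound (hε n).le i j z
    have h3 := qe_le' (hε n) z
    have h4 := qe_nonneg (1 / ((n:ℝ) + 1)) z
    have h5 := pow_le_pow_left₀ h4 h3 2
    have h6 : 0 ≤ s := h4.trans h3
    linarith

/-- Moving the derivative from `g` to the Landau kernel produces the drift `b_i * g`. -/
lemma sum_cv_a (i : Fin 3) (G : SchwartzMap E3 ℝ) (v : E3) :
    ∑ j, cv (aE 0 i j) (pdS j G) v = cv (bE 0 i) G v := by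
  simp only [cv_a_ibp]
  unfold cv
  rw [← integral_finsetSum _ fun j _ => cv_integrable (ker_c i j) G v]
  congr 1; funext w
  rw [← Finset.sum_mul, sum_cE_zero]

lemma bf_differentiable (i : Fin 3) : Differentiable ℝ (bE 1 i) := by
  have h3 := qe_pow_differentiable one_pos 3
  have hi := coord_differentiable i
  unfold bE; fun_prop

lemma pd_bf_bound (i : Fin 3) (z : E3) : |pd i (bE 1 i) z| ≤ 8 * qe 1 z ^ 3 := by
  have h3 := qe_pow_differentiable one_pos 3
  have hi := (coord_differentiable i).const_mul (-2)
  have e : pd i (bE 1 i) z = -2 * (1 - 3 * (z i * qe 1 z) ^ 2) * qe 1 z ^ 3 := by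
    unfold bE
    rw [pd_mul hi h3, pd_qe_pow one_pos]
    have := pd_mul (differentiable_const (-2:ℝ)) (coord_differentiable i) i z
    rw [this, pd_coord]
    simp [pd]; ring
  rw [e, abs_mul, abs_of_nonneg (pow_nonneg (qe_nonneg 1 z) 3)]
  refine mul_le_mul_of_nonneg_right ?_ (pow_nonneg (qe_nonneg 1 z) 3)
  have h := (sq_le_one_iff_abs_le_one _).2 (coord_mul_qe_le zero_le_one z i)
  rw [abs_le]; constructor <;> nlinarith [sq_nonneg (z i * qe 1 z)]

lemma pd_bf_ibp (i : Fin 3) (G : SchwartzMap E3 ℝ) (v : E3) :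
    pd i (cv (bE 1 i) G) v = cv (pd i (bE 1 i)) G v := by
  rw [pd_cv (ker_bf i)]
  refine cv_ibp (bf_differentiable i) i (C := 8) (fun z => ?_) (fun z => ?_) G v
  · have := bE_bound zero_le_one i z
    nlinarith [qe_nonneg 1 z, qe_one_le z]
  · have := pd_bf_bound i z
    have := pow_le_one₀ (n := 3) (qe_nonneg 1 z) (qe_one_le z)
    linarith

/-! ### Pointwise kernel bounds -/

/-- Peetre's inequality. -/
lemma peetre (v w : E3) : jap v * qe 1 (v - w) ≤ 2 * jap w := by
  rw [qe_one, ← div_eq_mul_inv, div_le_iff₀ (jap_pos _)]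
  have h1 := jap_le_add v w
  have h2 := norm_le_jap (v - w)
  nlinarith [one_le_jap w, one_le_jap (v - w)]

lemma qe_one_sq_le (v w : E3) : qe 1 (v - w) ^ 2 ≤ 4 * jap w ^ 2 * (jap v ^ 2)⁻¹ := by
  rw [← div_eq_mul_inv, le_div_iff₀ (pow_pos (jap_pos v) 2)]
  have := pow_le_pow_left₀ (mul_nonneg (jap_pos v).le (qe_nonneg 1 (v - w))) (peetre v w) 2
  linarith

lemma qe_one_cube_le (v w : E3) : qe 1 (v - w) ^ 3 ≤ 8 * jap w ^ 3 * (jap v ^ 3)⁻¹ := by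
  rw [← div_eq_mul_inv, le_div_iff₀ (pow_pos (jap_pos v) 3)]
  have := pow_le_pow_left₀ (mul_nonneg (jap_pos v).le (qe_nonneg 1 (v - w))) (peetre v w) 3
  linarith

lemma inv_sq_le_sqrt (v : E3) : (jap v ^ 2)⁻¹ ≤ √((jap v ^ 3)⁻¹) := by
  refine Real.le_sqrt_of_sq_le ?_
  have := one_le_jap v
  rw [← inv_pow, ← inv_pow, ← pow_mul]
  exact pow_le_pow_of_le_one (inv_nonneg.2 (jap_pos v).le) (inv_le_one_of_one_le₀ this)
    (by norm_num)

lemma qe_one_sq_le_sqrt (v w : E3) :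
    qe 1 (v - w) ^ 2 ≤ 4 * √((jap v ^ 3)⁻¹) * (jap w ^ 3 * (1 + ‖v - w‖⁻¹)) := by
  have h1 := qe_one_sq_le v w
  have h2 := inv_sq_le_sqrt v
  have h3 : jap w ^ 2 ≤ jap w ^ 3 := pow_le_pow_right₀ (one_le_jap w) (by norm_num)
  have h4 : (0:ℝ) ≤ ‖v - w‖⁻¹ := by positivity
  have h5 : 0 ≤ jap w ^ 3 := pow_nonneg (jap_pos w).le 3
  have h6 : 0 ≤ (jap v ^ 2)⁻¹ := inv_nonneg.2 (sq_nonneg _)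
  calc _ ≤ 4 * jap w ^ 2 * (jap v ^ 2)⁻¹ := h1
    _ ≤ 4 * jap w ^ 3 * √((jap v ^ 3)⁻¹) := by gcongr
    _ ≤ _ := by nlinarith [mul_nonneg (mul_nonneg h5 h4) (Real.sqrt_nonneg ((jap v ^ 3)⁻¹))]

/-- The soft drift kernel gains `⟨v⟩^{-3/2}` at the price of powers of `⟨w⟩`. -/
lemma bf_bound (i : Fin 3) (v w : E3) :
    |bE 1 i (v - w)| ≤ 8 * √((jap v ^ 3)⁻¹) * (jap w ^ 3 * (1 + ‖v - w‖⁻¹)) := by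
  have h1 := bE_bound zero_le_one i (v - w)
  have h2 := qe_one_sq_le_sqrt v w
  linarith

lemma pd_bf_bound' (i : Fin 3) (v w : E3) : |pd i (bE 1 i) (v - w)| ≤
    32 * √((jap v ^ 3)⁻¹) * (jap w ^ 3 * (1 + ‖v - w‖⁻¹)) := by
  have h1 := pd_bf_bound i (v - w)
  have h2 := qe_one_sq_le_sqrt v w
  have h3 : qe 1 (v - w) ^ 3 ≤ qe 1 (v - w) ^ 2 :=
    pow_le_pow_of_le_one (qe_nonneg _ _) (qe_one_le _) (by norm_num)
  linarith

lemma inv_norm_sq_eq {z : E3} (hz : z ≠ 0) :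
    (‖z‖ ^ 2)⁻¹ = qe 1 z ^ 2 * (1 + (‖z‖ ^ 2)⁻¹) := by
  have h : 0 < ‖z‖ := norm_pos_iff.2 hz
  have h2 : 0 < jap z := jap_pos z
  have h1 := jap_sq z
  rw [qe_one, inv_pow, h1]
  field_simp
  ring

/-- The difference of the singular and the soft drift kernel gains `⟨v⟩⁻³`. -/
lemma bdiff_bound (i : Fin 3) (v w : E3) : |bE 0 i (v - w) - bE 1 i (v - w)| ≤
    48 * (jap v ^ 3)⁻¹ * (jap w ^ 3 * (1 + (‖v - w‖ ^ 2)⁻¹)) := by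
  have h3 := qe_one_cube_le v w
  have hX : 0 ≤ (jap v ^ 3)⁻¹ := inv_nonneg.2 (pow_nonneg (jap_pos v).le 3)
  have hY : 0 ≤ jap w ^ 3 := pow_nonneg (jap_pos w).le 3
  by_cases hz : v - w = 0
  · have : bE 0 i (v - w) - bE 1 i (v - w) = 0 := by simp [hz, bE]
    rw [this, abs_zero]; positivity
  generalize v - w = z at *
  have ht : 0 < ‖z‖ := norm_pos_iff.2 hz
  have hN := inv_norm_sq_eq hz
  have h0 := qe_zero z
  have hp := qe_nonneg 1 z
  have hp1 := qe_one_le z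
  have hle : ‖z‖ * qe 1 z ≤ 1 := norm_mul_qe_le zero_le_one z
  have hle0 : 0 ≤ ‖z‖ * qe 1 z := mul_nonneg ht.le hp
  have hcube : qe 1 z ^ 3 ≤ qe 0 z ^ 3 :=
    pow_le_pow_left₀ hp (by rw [h0]; exact qe_le zero_le_one hz) 3
  have e1 : |bE 0 i z - bE 1 i z| ≤ 2 * (‖z‖ * (qe 0 z ^ 3 - qe 1 z ^ 3)) := by
    rw [bE, bE, show -2 * z i * qe 0 z ^ 3 - -2 * z i * qe 1 z ^ 3 =
      -(2 * (z i * (qe 0 z ^ 3 - qe 1 z ^ 3))) by ring, abs_neg, abs_mul, abs_mul,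
      abs_of_nonneg (sub_nonneg.2 hcube), abs_two]
    have := abs_coord_le z i
    gcongr
  -- with `s = |z|/⟨z⟩ ≤ 1`, the elementary bound is `1 - s³ ≤ 3 (1 - s²) = 3 ⟨z⟩⁻²`
  have e2 : ‖z‖ * (qe 0 z ^ 3 - qe 1 z ^ 3) = (‖z‖ ^ 2)⁻¹ * (1 - (‖z‖ * qe 1 z) ^ 3) := by
    rw [h0]; field_simp
  have e3 : 1 - (‖z‖ * qe 1 z) ^ 3 ≤ 3 * qe 1 z ^ 2 := by
    have : qe 1 z ^ 2 = 1 - (‖z‖ * qe 1 z) ^ 2 := by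
      have h1 := jap_sq z
      have h2 := jap_pos z
      rw [qe_one]; field_simp; linarith
    rw [this]
    set s := ‖z‖ * qe 1 z
    nlinarith [mul_nonneg (sub_nonneg.2 hle) hle0,
      mul_nonneg (mul_nonneg (sub_nonneg.2 hle) hle0) (sub_nonneg.2 hle),
      mul_nonneg (mul_nonneg (sub_nonneg.2 hle) hle0) hle0]
  have hU : 0 ≤ (‖z‖ ^ 2)⁻¹ := by positivity
  calc _ ≤ 2 * ((‖z‖ ^ 2)⁻¹ * (3 * qe 1 z ^ 2)) := by
        refine e1.trans ?_
        rw [e2]; gcongr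
    _ = 6 * (qe 1 z * qe 1 z ^ 3) * (1 + (‖z‖ ^ 2)⁻¹) := by
        nth_rw 1 [hN]; ring
    _ ≤ 6 * (1 * (8 * jap w ^ 3 * (jap v ^ 3)⁻¹)) * (1 + (‖z‖ ^ 2)⁻¹) := by
        gcongr
    _ = _ := by ring

/-- Where the derivative falls on the weight `⟨v⟩^k`, the factor `v_i ⟨v⟩⁻²` supplies the missing
power of `⟨v⟩`, so the full singular drift also gains `⟨v⟩⁻³`. -/
lemma bcoord_bound (i : Fin 3) (v w : E3) : |bE 0 i (v - w)| * (|v i| * (jap v ^ 2)⁻¹) ≤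
    8 * (jap v ^ 3)⁻¹ * (jap w ^ 3 * (1 + (‖v - w‖ ^ 2)⁻¹)) := by
  have hx := jap_pos v
  have hX : 0 ≤ (jap v ^ 3)⁻¹ := inv_nonneg.2 (pow_nonneg (jap_pos v).le 3)
  have hY : 0 ≤ jap w ^ 3 := pow_nonneg (jap_pos w).le 3
  by_cases hz : v - w = 0
  · have : bE 0 i (v - w) = 0 := by simp [hz, bE]
    rw [this, abs_zero, zero_mul]; positivity
  have hN := inv_norm_sq_eq hz
  have hb := bE_bound le_rfl i (v - w)
  rw [qe_sq_zero, hN] at hb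
  have h2 := qe_one_sq_le v w
  have hv := (abs_coord_le v i).trans (norm_le_jap v)
  have hY2 : jap w ^ 2 ≤ jap w ^ 3 := pow_le_pow_right₀ (one_le_jap w) (by norm_num)
  have hU : 0 ≤ 1 + (‖v - w‖ ^ 2)⁻¹ := by positivity
  have hx2 : (0:ℝ) ≤ (jap v ^ 2)⁻¹ := by positivity
  have ha : |v i| * (jap v ^ 2)⁻¹ ≤ (jap v)⁻¹ := by
    calc _ ≤ jap v * (jap v ^ 2)⁻¹ := by gcongr
      _ = _ := by field_simp
  calc _ ≤ (2 * ((4 * jap w ^ 3 * (jap v ^ 2)⁻¹) * (1 + (‖v - w‖ ^ 2)⁻¹))) * (jap v)⁻¹ := by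
        refine mul_le_mul (hb.trans ?_) ha (by positivity) (by positivity)
        gcongr
        exact h2.trans (by gcongr)
    _ = _ := by field_simp; ring

/-- `|p|² + |v × p|²`, the quadratic form controlled by the anisotropic norm. -/
def Sq (v : E3) (p : Fin 3 → ℝ) : ℝ :=
  p 0 ^ 2 + p 1 ^ 2 + p 2 ^ 2 + (v 0 * p 1 - v 1 * p 0) ^ 2 + (v 0 * p 2 - v 2 * p 0) ^ 2 +
    (v 1 * p 2 - v 2 * p 1) ^ 2

lemma Sq_nonneg (v : E3) (p : Fin 3 → ℝ) : 0 ≤ Sq v p := by unfold Sq; positivity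

/-- `|z × p|²`. -/
def cr (z : E3) (p : Fin 3 → ℝ) : ℝ :=
  (z 0 * p 1 - z 1 * p 0) ^ 2 + (z 0 * p 2 - z 2 * p 0) ^ 2 + (z 1 * p 2 - z 2 * p 1) ^ 2

lemma cr_nonneg (v : E3) (p : Fin 3 → ℝ) : 0 ≤ cr v p := by unfold cr; positivity

lemma cr_le (z v : E3) (p : Fin 3 → ℝ) : cr z p ≤ ‖z‖ ^ 2 * Sq v p := by
  have h0 : cr z p ≤ ‖z‖ ^ 2 * (p 0 ^ 2 + p 1 ^ 2 + p 2 ^ 2) := by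
    rw [norm_sq_eq, Fin.sum_univ_three, cr]
    nlinarith [sq_nonneg (z 0 * p 0 + z 1 * p 1 + z 2 * p 2)]
  refine h0.trans (mul_le_mul_of_nonneg_left ?_ (sq_nonneg _))
  unfold Sq
  linarith [sq_nonneg (v 0 * p 1 - v 1 * p 0), sq_nonneg (v 0 * p 2 - v 2 * p 0),
    sq_nonneg (v 1 * p 2 - v 2 * p 1)]

lemma three_cs (a0 a1 a2 b0 b1 b2 : ℝ) : |a0 * b0 + a1 * b1 + a2 * b2| ≤
    √(a0 ^ 2 + a1 ^ 2 + a2 ^ 2) * √(b0 ^ 2 + b1 ^ 2 + b2 ^ 2) := by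
  rw [← Real.sqrt_mul (by positivity)]
  refine Real.abs_le_sqrt ?_
  nlinarith [sq_nonneg (a0 * b1 - a1 * b0), sq_nonneg (a0 * b2 - a2 * b0),
    sq_nonneg (a1 * b2 - a2 * b1)]

/-- `|(v - w) × p| ≤ ⟨w⟩ (|p|² + |v × p|²)^{1/2}`. -/
lemma cr_sub_le (v w : E3) (p : Fin 3 → ℝ) : cr (v - w) p ≤ jap w ^ 2 * Sq v p := by
  have h1 : cr w p ≤ ‖w‖ ^ 2 * (p 0 ^ 2 + p 1 ^ 2 + p 2 ^ 2) := by
    rw [norm_sq_eq, Fin.sum_univ_three, cr]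
    nlinarith [sq_nonneg (w 0 * p 0 + w 1 * p 1 + w 2 * p 2)]
  have hS : Sq v p = (p 0 ^ 2 + p 1 ^ 2 + p 2 ^ 2) + cr v p := by unfold Sq cr; ring
  set P := p 0 ^ 2 + p 1 ^ 2 + p 2 ^ 2 with hP
  have hP0 : 0 ≤ P := by positivity
  have h2 : √(cr (v - w) p) ≤ √(cr v p) + ‖w‖ * √P := by
    have hw : √(cr w p) ≤ ‖w‖ * √P := by
      rw [← Real.sqrt_sq (norm_nonneg w), ← Real.sqrt_mul (sq_nonneg _)]
      exact Real.sqrt_le_sqrt h1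
    refine le_trans ?_ (add_le_add_right hw _)
    refine Real.sqrt_le_iff.2 ⟨by positivity, ?_⟩
    have hc := three_cs (v 0 * p 1 - v 1 * p 0) (v 0 * p 2 - v 2 * p 0) (v 1 * p 2 - v 2 * p 1)
      (w 0 * p 1 - w 1 * p 0) (w 0 * p 2 - w 2 * p 0) (w 1 * p 2 - w 2 * p 1)
    rw [← cr, ← cr] at hc
    have hc' := (abs_le.1 hc).1
    have e1 := Real.sq_sqrt (cr_nonneg v p)
    have e2 := Real.sq_sqrt (cr_nonneg w p)
    have e3 : cr (v - w) p = cr v p + cr w p - 2 * ((v 0 * p 1 - v 1 * p 0) *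
        (w 0 * p 1 - w 1 * p 0) + (v 0 * p 2 - v 2 * p 0) * (w 0 * p 2 - w 2 * p 0) +
        (v 1 * p 2 - v 2 * p 1) * (w 1 * p 2 - w 2 * p 1)) := by
      simp only [cr, PiLp.sub_apply]; ring
    rw [e3]; nlinarith
  rw [jap_sq, hS, ← Real.sq_sqrt (cr_nonneg (v - w) p)]
  have h3 := pow_le_pow_left₀ (Real.sqrt_nonneg _) h2 2
  refine h3.trans ?_
  have e1 := Real.sq_sqrt (cr_nonneg v p)
  have e2 := Real.sq_sqrt hP0
  nth_rw 2 [← e1]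
  nth_rw 2 [← e2]
  nlinarith [sq_nonneg (√P - ‖w‖ * √(cr v p))]

/-- The Landau matrix only sees the parts of `p, q` orthogonal to `v - w`; this is what makes the
anisotropic norm sufficient. -/
lemma a_bound (v w : E3) (p q : Fin 3 → ℝ) :
    |∑ i, ∑ j, aE 0 i j (v - w) * p j * q i| ≤
      8 * (jap v ^ 3)⁻¹ * (√(Sq v p) * √(Sq v q)) * (jap w ^ 3 * (1 + ‖v - w‖⁻¹)) := by
  have hx := jap_pos v
  have hy := one_le_jap w
  by_cases hz : v - w = 0
  · have : ∑ i, ∑ j, aE 0 i j (v - w) * p j * q i = 0 := by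
      simp [hz, aE, qe_zero]
    rw [this, abs_zero]; positivity
  have hle := jap_le_add v w
  have b1 := cr_le (v - w) v p
  have b2 := cr_le (v - w) v q
  have b3 := cr_sub_le v w p
  have b4 := cr_sub_le v w q
  set z := v - w with hzd
  have ht : 0 < ‖z‖ := norm_pos_iff.2 hz
  have e : ∑ i, ∑ j, aE 0 i j z * p j * q i = (‖z‖ ^ 3)⁻¹ *
      ((z 0 * p 1 - z 1 * p 0) * (z 0 * q 1 - z 1 * q 0) +
       (z 0 * p 2 - z 2 * p 0) * (z 0 * q 2 - z 2 * q 0) +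
       (z 1 * p 2 - z 2 * p 1) * (z 1 * q 2 - z 2 * q 1)) := by
    have hn := norm_sq_eq z
    rw [Fin.sum_univ_three] at hn
    have h1 : qe 0 z = (‖z‖ ^ 3)⁻¹ * (z 0 ^ 2 + z 1 ^ 2 + z 2 ^ 2) := by
      rw [← hn, qe_zero]; field_simp
    have h2 : qe 0 z ^ 3 = (‖z‖ ^ 3)⁻¹ := by rw [qe_zero, inv_pow]
    simp only [Fin.sum_univ_three, aE, h2]
    rw [h1]
    simp only [Fin.isValue, Fin.reduceEq, if_true, if_false]
    ring
  have hc := three_cs (z 0 * p 1 - z 1 * p 0) (z 0 * p 2 - z 2 * p 0) (z 1 * p 2 - z 2 * p 1)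
      (z 0 * q 1 - z 1 * q 0) (z 0 * q 2 - z 2 * q 0) (z 1 * q 2 - z 2 * q 1)
  rw [← cr, ← cr] at hc
  have key : ∀ m : ℝ, 0 ≤ m → cr z p ≤ m ^ 2 * Sq v p → cr z q ≤ m ^ 2 * Sq v q →
      √(cr z p) * √(cr z q) ≤ m ^ 2 * (√(Sq v p) * √(Sq v q)) := by
    intro m hm h1 h2
    have k1 := Real.sqrt_le_sqrt h1
    have k2 := Real.sqrt_le_sqrt h2
    rw [Real.sqrt_mul (sq_nonneg _), Real.sqrt_sq hm] at k1 k2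
    calc _ ≤ (m * √(Sq v p)) * (m * √(Sq v q)) := by gcongr
      _ = _ := by ring
  rw [e, abs_mul, abs_of_pos (by positivity : 0 < (‖z‖ ^ 3)⁻¹)]
  set S := √(Sq v p) * √(Sq v q) with hS
  have hS0 : 0 ≤ S := by positivity
  have hti : (0:ℝ) < ‖z‖⁻¹ := by positivity
  rcases le_total ‖z‖ (jap w) with h | h
  · have k := key _ ht.le b1 b2
    have hx2 : jap v ^ 3 ≤ 8 * jap w ^ 3 := by
      have := pow_le_pow_left₀ hx.le (show jap v ≤ 2 * jap w by linarith) 3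
      linarith
    have h1 : 1 ≤ 8 * (jap v ^ 3)⁻¹ * jap w ^ 3 := by
      rw [show 8 * (jap v ^ 3)⁻¹ * jap w ^ 3 = (8 * jap w ^ 3) / jap v ^ 3 by
        field_simp, le_div_iff₀ (by positivity)]
      linarith
    calc _ ≤ (‖z‖ ^ 3)⁻¹ * (‖z‖ ^ 2 * S) := by gcongr; exact hc.trans k
      _ = 1 * (S * ‖z‖⁻¹) := by field_simp
      _ ≤ (8 * (jap v ^ 3)⁻¹ * jap w ^ 3) * (S * (1 + ‖z‖⁻¹)) := by
        gcongr; linarith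
      _ = _ := by ring
  · have k := key _ (jap_pos w).le b3 b4
    have hx2 : jap v ^ 3 ≤ 8 * ‖z‖ ^ 3 := by
      have := pow_le_pow_left₀ hx.le (show jap v ≤ 2 * ‖z‖ by linarith) 3
      linarith
    have h1 : (‖z‖ ^ 3)⁻¹ ≤ 8 * (jap v ^ 3)⁻¹ := by
      rw [← div_eq_mul_inv, inv_le_comm₀ (by positivity) (by positivity), inv_div]
      linarith
    calc _ ≤ (8 * (jap v ^ 3)⁻¹) * (jap w ^ 2 * S) := by gcongr; exact hc.trans k
      _ ≤ (8 * (jap v ^ 3)⁻¹) * ((jap w ^ 3 * (1 + ‖z‖⁻¹)) * S) := by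
        gcongr
        calc jap w ^ 2 ≤ jap w ^ 3 * 1 := by nlinarith [sq_nonneg (jap w)]
          _ ≤ _ := by gcongr; linarith
      _ = _ := by ring

/-! ### Weighted Cauchy–Schwarz estimates -/

/-- Cauchy–Schwarz for a function dominated by `√a √b`. -/
lemma cs_bound {a b G : E3 → ℝ} {C : ℝ} (hC : 0 ≤ C) (ha : ∀ v, 0 ≤ a v) (hb : ∀ v, 0 ≤ b v)
    (ia : Integrable a) (ib : Integrable b) (h : ∀ v, |G v| ≤ C * (√(a v) * √(b v))) :
    |∫ v, G v| ≤ C * (√(∫ v, a v) * √(∫ v, b v)) := by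
  have key : ∀ {a : E3 → ℝ}, (∀ v, 0 ≤ a v) → Integrable a →
      MemLp (fun v => √(a v)) (ENNReal.ofReal 2) := by
    intro a ha ia
    have hm : AEStronglyMeasurable (fun v => √(a v)) volume :=
      Real.continuous_sqrt.comp_aestronglyMeasurable ia.1
    rw [show ENNReal.ofReal 2 = 2 by simp, memLp_two_iff_integrable_sq hm]
    simpa [Real.sq_sqrt (ha _)] using ia
  have ma := key ha ia
  have mb := key hb ib
  have hInt : Integrable (fun v => √(a v) * √(b v)) := by
    rw [show ENNReal.ofReal 2 = 2 by simp] at ma mb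
    exact MemLp.integrable_mul ma mb
  have h1 : |∫ v, G v| ≤ ∫ v, C * (√(a v) * √(b v)) := by
    rw [← Real.norm_eq_abs]
    exact norm_integral_le_of_norm_le (hInt.const_mul C) (Filter.Eventually.of_forall h)
  rw [integral_const_mul] at h1
  refine h1.trans (mul_le_mul_of_nonneg_left ?_ hC)
  have h2 := integral_mul_le_Lp_mul_Lq_of_nonneg (μ := volume) Real.HolderConjugate.two_two
    (Filter.Eventually.of_forall fun v => Real.sqrt_nonneg (a v))
    (Filter.Eventually.of_forall fun v => Real.sqrt_nonneg (b v)) ma mb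
  rw [← Real.sqrt_eq_rpow, ← Real.sqrt_eq_rpow] at h2
  simpa [Real.sq_sqrt (ha _), Real.sq_sqrt (hb _)] using h2

/-- `N(v) = ∫ g(w)² ⟨w⟩^{2k} (1 + |v-w|⁻²) dw`. -/
noncomputable def Nn (k : ℝ) (g : SchwartzMap E3 ℝ) (v : E3) : ℝ :=
  ∫ w, wS k g w ^ 2 * (1 + (‖v - w‖ ^ 2)⁻¹)

lemma N_integrable (u : SchwartzMap E3 ℝ) (v : E3) :
    Integrable (fun w => u w ^ 2 * (1 + (‖v - w‖ ^ 2)⁻¹)) := by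
  have := (sq_integrable u).add (sq_kernel_integrable u v)
  refine this.congr (Filter.Eventually.of_forall fun w => ?_)
  simp only [Pi.add_apply]
  rw [norm_sub_rev]; ring

lemma Nn_nonneg (k : ℝ) (g : SchwartzMap E3 ℝ) (v : E3) : 0 ≤ Nn k g v :=
  integral_nonneg fun w => by positivity

lemma abs_wS_sqrt (k : ℝ) (g : SchwartzMap E3 ℝ) (w : E3) {b q : ℝ}
    (hb : (jap w ^ (3 - k) * q) ^ 2 ≤ b) :
    jap w ^ 3 * q * |g w| ≤ √(wS k g w ^ 2) * √b := by
  have hx := jap_pos w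
  have h1 := Real.le_sqrt_of_sq_le hb
  rw [Real.sqrt_sq_eq_abs, wS_apply, abs_mul, abs_of_pos (Real.rpow_pos_of_pos hx k)]
  have h2 : jap w ^ k * jap w ^ (3 - k) = jap w ^ 3 := by
    rw [← Real.rpow_add hx, ← Real.rpow_natCast]; congr 1; push_cast; ring
  calc _ = |g w| * jap w ^ k * (jap w ^ (3 - k) * q) := by rw [← h2]; ring
    _ ≤ _ := by gcongr

lemma jap_sq_pow (k : ℝ) (w : E3) (q : ℝ) :
    (jap w ^ (3 - k) * q) ^ 2 = jap w ^ (-(2 * k - 6)) * q ^ 2 := by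
  rw [mul_pow, ← Real.rpow_natCast (jap w ^ (3 - k)), ← Real.rpow_mul (jap_pos w).le]
  congr 2; push_cast; ring

/-- Kernels with a `|z|⁻¹` singularity and a loss of `⟨w⟩³` are controlled by `‖g‖_{L²_k}`, since
`⟨w⟩^{6-2k}` is integrable for `k > 9/2`. -/
lemma L_one {k : ℝ} (hk : 9 / 2 < k) : ∃ C, 0 < C ∧ ∀ (g : SchwartzMap E3 ℝ) (v : E3) (D : ℝ)
    (Φ : E3 → ℝ), 0 ≤ D → (∀ w, |Φ w| ≤ D * (jap w ^ 3 * (1 + ‖v - w‖⁻¹))) →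
    |∫ w, Φ w * g w| ≤ D * (C * √(∫ w, wS k g w ^ 2)) := by
  obtain ⟨C, hC, h⟩ := kernel_unif (s := 2 * k - 6) (by linarith)
  refine ⟨2 * √C, by positivity, fun g v D Φ hD hΦ => ?_⟩
  have := cs_bound (a := fun w => wS k g w ^ 2)
    (b := fun w => jap w ^ (-(2 * k - 6)) * (1 + (‖v - w‖ ^ 2)⁻¹)) (G := fun w => Φ w * g w)
    (C := 2 * D) (by positivity) (fun w => sq_nonneg _)
    (fun w => mul_nonneg (Real.rpow_nonneg (jap_pos w).le _) (by positivity))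
    (sq_integrable _) (h v).1 (fun w => ?_)
  · refine this.trans ?_
    have h2 := Real.sqrt_le_sqrt (h v).2
    calc _ ≤ 2 * D * (√(∫ w, wS k g w ^ 2) * √C) := by gcongr
      _ = _ := by ring
  · have hq : (jap w ^ (3 - k) * ((1 + ‖v - w‖⁻¹) / 2)) ^ 2 ≤
        jap w ^ (-(2 * k - 6)) * (1 + (‖v - w‖ ^ 2)⁻¹) := by
      rw [jap_sq_pow, ← inv_pow]
      refine mul_le_mul_of_nonneg_left ?_ (Real.rpow_nonneg (jap_pos w).le _)
      nlinarith [sq_nonneg (1 - ‖v - w‖⁻¹), sq_nonneg (‖v - w‖⁻¹)]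
    have h3 := abs_wS_sqrt k g w hq
    rw [abs_mul]
    calc _ ≤ D * (jap w ^ 3 * (1 + ‖v - w‖⁻¹)) * |g w| :=
          mul_le_mul_of_nonneg_right (hΦ w) (abs_nonneg _)
      _ = 2 * D * (jap w ^ 3 * ((1 + ‖v - w‖⁻¹) / 2) * |g w|) := by ring
      _ ≤ _ := by gcongr

/-- Kernels with a `|z|⁻²` singularity and a loss of `⟨w⟩³` are controlled by `N(v)^{1/2}`. -/
lemma L_two {k : ℝ} (hk : 9 / 2 < k) : ∃ C, 0 < C ∧ ∀ (g : SchwartzMap E3 ℝ) (v : E3) (D : ℝ)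
    (Φ : E3 → ℝ), 0 ≤ D → (∀ w, |Φ w| ≤ D * (jap w ^ 3 * (1 + (‖v - w‖ ^ 2)⁻¹))) →
    |∫ w, Φ w * g w| ≤ D * (C * √(Nn k g v)) := by
  obtain ⟨C, hC, h⟩ := kernel_unif (s := 2 * k - 6) (by linarith)
  refine ⟨√C, by positivity, fun g v D Φ hD hΦ => ?_⟩
  have := cs_bound (a := fun w => wS k g w ^ 2 * (1 + (‖v - w‖ ^ 2)⁻¹))
    (b := fun w => jap w ^ (-(2 * k - 6)) * (1 + (‖v - w‖ ^ 2)⁻¹)) (G := fun w => Φ w * g w)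
    (C := D) (by positivity) (fun w => by positivity)
    (fun w => mul_nonneg (Real.rpow_nonneg (jap_pos w).le _) (by positivity))
    (N_integrable _ v) (h v).1 (fun w => ?_)
  · refine this.trans ?_
    have h2 := Real.sqrt_le_sqrt (h v).2
    calc _ ≤ D * (√(Nn k g v) * √C) := by rw [Nn]; gcongr
      _ = _ := by ring
  · have hU : 0 ≤ 1 + (‖v - w‖ ^ 2)⁻¹ := by positivity
    have hq : (jap w ^ (3 - k) * √(1 + (‖v - w‖ ^ 2)⁻¹)) ^ 2 ≤
        jap w ^ (-(2 * k - 6)) * (1 + (‖v - w‖ ^ 2)⁻¹) := by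
      rw [jap_sq_pow, Real.sq_sqrt hU]
    have h3 := abs_wS_sqrt k g w hq
    rw [abs_mul, Real.sqrt_mul (sq_nonneg _)]
    calc _ ≤ D * (jap w ^ 3 * (1 + (‖v - w‖ ^ 2)⁻¹)) * |g w| :=
          mul_le_mul_of_nonneg_right (hΦ w) (abs_nonneg _)
      _ = D * (jap w ^ 3 * √(1 + (‖v - w‖ ^ 2)⁻¹) * |g w| * √(1 + (‖v - w‖ ^ 2)⁻¹)) := by
          nth_rw 1 [← Real.mul_self_sqrt hU]; ring
      _ ≤ D * (√(wS k g w ^ 2) * √(jap w ^ (-(2 * k - 6)) * (1 + (‖v - w‖ ^ 2)⁻¹)) *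
            √(1 + (‖v - w‖ ^ 2)⁻¹)) := by gcongr
      _ = _ := by ring

/-! ### The anisotropic norm as an integral -/

/-- Multiplication of a Schwartz function by the coordinate `v_i`. -/
noncomputable def coS (i : Fin 3) (F : SchwartzMap E3 ℝ) : SchwartzMap E3 ℝ :=
  SchwartzMap.smulLeftCLM ℝ (fun v : E3 => v i) F

lemma coS_apply (i : Fin 3) (F : SchwartzMap E3 ℝ) (v : E3) : coS i F v = v i * F v := by
  have h : Function.HasTemperateGrowth (fun v : E3 => v i) :=
    (EuclideanSpace.proj i : E3 →L[ℝ] ℝ).hasTemperateGrowth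
  rw [coS, SchwartzMap.smulLeftCLM_apply_apply h, smul_eq_mul]

/-- The rotational derivative of a Schwartz function, as a Schwartz function. -/
noncomputable def rotS (i j : Fin 3) (F : SchwartzMap E3 ℝ) : SchwartzMap E3 ℝ :=
  coS i (pdS j F) - coS j (pdS i F)

lemma coe_rotS (i j : Fin 3) (F : SchwartzMap E3 ℝ) : ⇑(rotS i j F) = rotD i j F := by
  funext v
  simp [rotS, rotD, coS_apply, pdS_apply]

lemma rpow_three (v : E3) : jap v ^ (-(3/2) * 2 : ℝ) = (jap v ^ 3)⁻¹ := by
  rw [show (-(3/2) * 2 : ℝ) = -((3:ℕ):ℝ) by norm_num, Real.rpow_neg (jap_pos v).le,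
    Real.rpow_natCast]

lemma wS_sq (s : ℝ) (u : SchwartzMap E3 ℝ) (v : E3) :
    wS s u v ^ 2 = u v ^ 2 * jap v ^ (s * 2) := by
  rw [wS_apply, mul_pow, ← Real.rpow_natCast (jap v ^ s), ← Real.rpow_mul (jap_pos v).le]
  norm_num

lemma X_sq_integrable (u : SchwartzMap E3 ℝ) :
    Integrable (fun v => (jap v ^ 3)⁻¹ * u v ^ 2) := by
  refine (sq_integrable (wS (-(3/2)) u)).congr (Filter.Eventually.of_forall fun v => ?_)
  simp only []
  rw [wS_sq, rpow_three, mul_comm]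

lemma Lpl_eq (l : ℝ) (u : E3 → ℝ) : Lpl 2 l u = √(∫ v, u v ^ 2 * jap v ^ (l * 2)) := by
  rw [Lpl, Real.sqrt_eq_rpow]
  simp [sq_abs]

lemma Lpl_sq (l : ℝ) (u : E3 → ℝ) : Lpl 2 l u ^ 2 = ∫ v, u v ^ 2 * jap v ^ (l * 2) := by
  rw [Lpl_eq, Real.sq_sqrt]
  exact integral_nonneg fun v => mul_nonneg (sq_nonneg _) (Real.rpow_nonneg (jap_pos v).le _)

lemma Lpl_wS (k : ℝ) (u : SchwartzMap E3 ℝ) : Lpl 2 k u = √(∫ v, wS k u v ^ 2) := by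
  rw [Lpl_eq]; simp only [wS_sq]

lemma Lpl_X (u : E3 → ℝ) : Lpl 2 (-(3/2)) u ^ 2 = ∫ v, (jap v ^ 3)⁻¹ * u v ^ 2 := by
  rw [Lpl_sq]
  simp only [rpow_three]
  simp only [mul_comm]

/-- The pointwise density of the anisotropic norm. -/
noncomputable def Wd (F : SchwartzMap E3 ℝ) (v : E3) : ℝ :=
  F v ^ 2 + Sq v (fun i => pd i F v)

lemma Wd_nonneg (F : SchwartzMap E3 ℝ) (v : E3) : 0 ≤ Wd F v :=
  add_nonneg (sq_nonneg _) (Sq_nonneg _ _)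

lemma Wd_eq (F : SchwartzMap E3 ℝ) (v : E3) : Wd F v = rotS 0 1 F v ^ 2 + rotS 0 2 F v ^ 2 +
    rotS 1 2 F v ^ 2 + F v ^ 2 + pdS 0 F v ^ 2 + pdS 1 F v ^ 2 + pdS 2 F v ^ 2 := by
  simp only [Wd, Sq, coe_rotS, rotD, pdS_apply]; ring

lemma XW_integrable (F : SchwartzMap E3 ℝ) : Integrable (fun v => (jap v ^ 3)⁻¹ * Wd F v) := by
  simp only [Wd_eq, mul_add]
  have := X_sq_integrable
  exact ((((((this _).add (this _)).add (this _)).add (this _)).add (this _)).add (this _)).add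
    (this _)

lemma multiIdx_one : multiIdx 1 = {![0,0,0], ![1,0,0], ![0,1,0], ![0,0,1]} := by
  decide

lemma HAsq_eq (F : SchwartzMap E3 ℝ) : HAsq F = ∫ v, (jap v ^ 3)⁻¹ * Wd F v := by
  have hf : (Finset.univ.filter (fun p : Fin 3 × Fin 3 => p.1 < p.2)) =
      {((0:Fin 3),(1:Fin 3)), (0,2), (1,2)} := by decide
  have hi := X_sq_integrable
  have e : HAsq F = (∫ v, (jap v ^ 3)⁻¹ * rotS 0 1 F v ^ 2) +
      (∫ v, (jap v ^ 3)⁻¹ * rotS 0 2 F v ^ 2)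
      + (∫ v, (jap v ^ 3)⁻¹ * rotS 1 2 F v ^ 2) + (∫ v, (jap v ^ 3)⁻¹ * F v ^ 2) +
      (∫ v, (jap v ^ 3)⁻¹ * pdS 0 F v ^ 2) + (∫ v, (jap v ^ 3)⁻¹ * pdS 1 F v ^ 2) +
      (∫ v, (jap v ^ 3)⁻¹ * pdS 2 F v ^ 2) := by
    rw [HAsq, HSobSq, hf, multiIdx_one]
    rw [Finset.sum_insert (by decide), Finset.sum_insert (by decide), Finset.sum_singleton,
      Finset.sum_insert (by decide), Finset.sum_insert (by decide), Finset.sum_insert (by decide),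
      Finset.sum_singleton]
    simp only [Lpl_X, coe_rotS, coe_pdS]
    simp [pdM, pdPow]
    ring
  rw [e]
  simp only [Wd_eq, mul_add]
  rw [integral_add, integral_add, integral_add, integral_add, integral_add, integral_add]
  all_goals
    first
    | exact hi _
    | exact ((((((hi _).add (hi _)).add (hi _)).add (hi _)).add (hi _)).add (hi _))
    | exact ((((((hi _).add (hi _)).add (hi _)).add (hi _)).add (hi _)))
    | exact ((((((hi _).add (hi _)).add (hi _)).add (hi _))))
    | exact ((((((hi _).add (hi _)).add (hi _)))))
    | exact ((((((hi _).add (hi _))))))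

lemma HA_eq (F : SchwartzMap E3 ℝ) : HA F = √(∫ v, (jap v ^ 3)⁻¹ * Wd F v) := by
  rw [HA, HAsq_eq]

/-! ### Combining Tonelli and Hardy -/

/-- The gradient of `⟨v⟩^{-3/2} F`, to which Hardy's inequality is applied, is controlled by the
density of the anisotropic norm. -/
lemma grad_wS_le (F : SchwartzMap E3 ℝ) (v : E3) :
    ∑ i, pd i (wS (-(3/2)) F) v ^ 2 ≤ 5 * ((jap v ^ 3)⁻¹ * Wd F v) := by
  have hx := jap_pos v
  have hs : ∀ i, pd i (wS (-(3/2)) F) v ^ 2 ≤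
      (jap v ^ 3)⁻¹ * (2 * pd i F v ^ 2 + 9 / 2 * (F v ^ 2 * (v i ^ 2 * (jap v ^ 2)⁻¹))) := by
    intro i
    have e : pd i (wS (-(3/2)) F) v = jap v ^ (-(3/2) : ℝ) *
        (pd i F v + F v * (-(3/2) * v i * (jap v ^ 2)⁻¹)) := by
      rw [pd_wS, show (-(3/2) - 2 : ℝ) = -(3/2) + -((2:ℕ):ℝ) by norm_num, Real.rpow_add hx,
        Real.rpow_neg hx.le ((2:ℕ):ℝ), Real.rpow_natCast]
      ring
    have h3 : (jap v ^ (-(3/2) : ℝ)) ^ 2 = (jap v ^ 3)⁻¹ := by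
      rw [← rpow_three, ← Real.rpow_natCast, ← Real.rpow_mul hx.le]; norm_num
    rw [e, mul_pow, h3]
    refine mul_le_mul_of_nonneg_left ?_ (by positivity)
    have h1 : (jap v ^ 2)⁻¹ ≤ 1 := inv_le_one_of_one_le₀ (one_le_pow₀ (one_le_jap v))
    have h0 : 0 ≤ (jap v ^ 2)⁻¹ := by positivity
    set c := (jap v ^ 2)⁻¹
    have h2 : c ^ 2 ≤ c := by nlinarith
    have h5 := mul_le_mul_of_nonneg_left h2 (sq_nonneg (F v * v i))
    nlinarith [sq_nonneg (pd i F v - F v * (-(3/2) * v i * c))]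
  have hv : ∑ i, v i ^ 2 * (jap v ^ 2)⁻¹ ≤ 1 := by
    rw [← Finset.sum_mul, ← norm_sq_eq, ← div_eq_mul_inv, div_le_one (by positivity), jap_sq]
    linarith
  refine (Finset.sum_le_sum fun i _ => hs i).trans ?_
  rw [← Finset.mul_sum, ← mul_assoc, mul_comm 5, mul_assoc]
  refine mul_le_mul_of_nonneg_left ?_ (by positivity)
  rw [Finset.sum_add_distrib, ← Finset.mul_sum, ← Finset.mul_sum, ← Finset.mul_sum]
  have h4 := mul_le_mul_of_nonneg_left hv (sq_nonneg (F v))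
  have h5 : ∑ i, pd i F v ^ 2 ≤ Sq v (fun i => pd i F v) := by
    rw [Fin.sum_univ_three]; unfold Sq
    nlinarith [sq_nonneg (v 0 * pd 1 F v - v 1 * pd 0 F v),
      sq_nonneg (v 0 * pd 2 F v - v 2 * pd 0 F v), sq_nonneg (v 1 * pd 2 F v - v 2 * pd 1 F v)]
  have h6 := Sq_nonneg v (fun i => pd i F v)
  unfold Wd
  nlinarith [sq_nonneg (F v)]

/-- Tonelli and Hardy: integrating `|v-w|⁻²` against `⟨v⟩⁻³ F(v)²` is bounded uniformly in `w` by
the anisotropic norm of `F`. -/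
lemma N_bound (k : ℝ) (F g : SchwartzMap E3 ℝ) :
    Integrable (fun v => (jap v ^ 3)⁻¹ * F v ^ 2 * Nn k g v) ∧
    ∫ v, (jap v ^ 3)⁻¹ * F v ^ 2 * Nn k g v ≤
      21 * ((∫ w, wS k g w ^ 2) * ∫ v, (jap v ^ 3)⁻¹ * Wd F v) := by
  set u := wS (-(3/2)) F with hu
  set G := wS k g with hG
  set M := ∫ v, (jap v ^ 3)⁻¹ * Wd F v with hM
  have husq : ∀ v, u v ^ 2 = (jap v ^ 3)⁻¹ * F v ^ 2 := fun v => by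
    rw [hu, wS_sq, rpow_three, mul_comm]
  have hin : ∀ w : E3, ∫ v, u v ^ 2 * (1 + (‖v - w‖ ^ 2)⁻¹) ≤ 21 * M := by
    intro w
    have h1 : ∫ v, u v ^ 2 ≤ M := by
      refine integral_mono (sq_integrable u) (XW_integrable F) fun v => ?_
      simp only [husq]
      refine mul_le_mul_of_nonneg_left ?_ (inv_nonneg.2 (pow_nonneg (jap_pos v).le 3))
      unfold Wd
      linarith [Sq_nonneg v (fun i => pd i F v)]
    have h2 := hardy u w
    have h3 : ∫ v, ∑ i, pd i u v ^ 2 ≤ 5 * M := by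
      rw [hM, ← integral_const_mul]
      refine integral_mono ?_ ((XW_integrable F).const_mul 5) fun v => grad_wS_le F v
      refine integrable_finsetSum _ fun i _ => ?_
      simpa only [pdS_apply] using sq_integrable (pdS i u)
    simp only [mul_add, mul_one]
    rw [integral_add (sq_integrable u) (sq_kernel_integrable u w)]
    linarith
  set Φ : E3 × E3 → ℝ := fun p => u p.1 ^ 2 * (G p.2 ^ 2 * (1 + (‖p.1 - p.2‖ ^ 2)⁻¹)) with hΦ
  have hΦm : Measurable Φ := by
    have := u.continuous.measurable
    have := G.continuous.measurable
    fun_prop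
  have hΦ0 : ∀ p, 0 ≤ Φ p := fun p => by positivity
  have hsec : ∀ w, Integrable (fun v => Φ (v, w)) := fun w => by
    refine (((sq_integrable u).add (sq_kernel_integrable u w)).const_mul (G w ^ 2)).congr
      (Filter.Eventually.of_forall fun v => ?_)
    simp only [Pi.add_apply, hΦ]; ring
  have hsecb : ∀ w, ∫ v, Φ (v, w) ≤ 21 * M * G w ^ 2 := fun w => by
    have e : ∀ v, Φ (v, w) = G w ^ 2 * (u v ^ 2 * (1 + (‖v - w‖ ^ 2)⁻¹)) := fun v => by
      simp only [hΦ]; ring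
    simp only [e]
    rw [integral_const_mul]
    nlinarith [hin w, sq_nonneg (G w)]
  have hInt : Integrable Φ (volume.prod volume) := by
    rw [integrable_prod_iff' hΦm.aestronglyMeasurable]
    refine ⟨Filter.Eventually.of_forall hsec, ?_⟩
    refine ((sq_integrable G).const_mul (21 * M)).mono'
      (hΦm.norm.aestronglyMeasurable.prod_swap.integral_prod_right')
      (Filter.Eventually.of_forall fun w => ?_)
    have e : ∀ v, ‖Φ (v, w)‖ = Φ (v, w) := fun v => Real.norm_of_nonneg (hΦ0 _)
    simp only [e]
    rw [Real.norm_of_nonneg (integral_nonneg fun v => hΦ0 _)]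
    exact hsecb w
  have hv : ∀ v, (jap v ^ 3)⁻¹ * F v ^ 2 * Nn k g v = ∫ w, Φ (v, w) := fun v => by
    simp only [hΦ]
    rw [integral_const_mul, husq, Nn]
  simp only [hv]
  refine ⟨hInt.integral_prod_left, ?_⟩
  have hsw := integral_integral_swap (f := fun v w => Φ (v, w)) hInt
  rw [hsw]
  calc _ ≤ ∫ w, 21 * M * G w ^ 2 :=
        integral_mono hInt.integral_prod_right ((sq_integrable G).const_mul _) hsecb
    _ = _ := by rw [integral_const_mul]; ring

/-! ### Integration by parts and the flux -/

/-- Differentiable functions, bounded together with their first partial derivatives. -/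
def Nice (J : E3 → ℝ) : Prop :=
  Differentiable ℝ J ∧ (∃ C, ∀ v, |J v| ≤ C) ∧ ∀ i, ∃ C, ∀ v, |pd i J v| ≤ C

lemma schwartz_bdd (F : SchwartzMap E3 ℝ) : ∃ C, ∀ v, |F v| ≤ C :=
  ⟨_, fun v => SchwartzMap.norm_le_seminorm ℝ F v⟩

lemma nice_schwartz (F : SchwartzMap E3 ℝ) : Nice F :=
  ⟨F.differentiable, schwartz_bdd F, fun i => by
    rw [← coe_pdS]; exact schwartz_bdd (pdS i F)⟩

lemma nice_cv {κ : E3 → ℝ} (hκ : Ker κ) (G : SchwartzMap E3 ℝ) : Nice (cv κ G) :=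
  ⟨cv_differentiable hκ G, cv_bdd hκ G, fun i => by
    simp only [pd_cv hκ]; exact cv_bdd hκ (pdS i G)⟩

lemma Nice.mul {J K : E3 → ℝ} (hJ : Nice J) (hK : Nice K) : Nice (fun v => J v * K v) := by
  obtain ⟨dJ, ⟨C, hC⟩, hJ'⟩ := hJ
  obtain ⟨dK, ⟨D, hD⟩, hK'⟩ := hK
  have hC0 : 0 ≤ C := (abs_nonneg _).trans (hC 0)
  have hb : ∀ {a b A B : ℝ}, |a| ≤ A → |b| ≤ B → |a * b| ≤ A * B := fun ha hb => by
    rw [abs_mul]; exact mul_le_mul ha hb (abs_nonneg _) ((abs_nonneg _).trans ha)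
  refine ⟨dJ.mul dK, ⟨C * D, fun v => hb (hC v) (hD v)⟩, fun i => ?_⟩
  obtain ⟨C', hC'⟩ := hJ' i
  obtain ⟨D', hD'⟩ := hK' i
  refine ⟨C' * D + C * D', fun v => ?_⟩
  rw [pd_mul dJ dK]
  exact (abs_add_le _ _).trans (add_le_add (hb (hC' v) (hD v)) (hb (hC v) (hD' v)))

lemma pd_sub {u w : E3 → ℝ} (hu : Differentiable ℝ u) (hw : Differentiable ℝ w) (i : Fin 3)
    (v : E3) : pd i (fun v => u v - w v) v = pd i u v - pd i w v := by
  rw [pd, fderiv_fun_sub (hu v) (hw v)]; simp [pd]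

lemma pd_add {u w : E3 → ℝ} (hu : Differentiable ℝ u) (hw : Differentiable ℝ w) (i : Fin 3)
    (v : E3) : pd i (fun v => u v + w v) v = pd i u v + pd i w v := by
  rw [pd, fderiv_fun_add (hu v) (hw v)]; simp [pd]

lemma Nice.sub {J K : E3 → ℝ} (hJ : Nice J) (hK : Nice K) : Nice (fun v => J v - K v) := by
  obtain ⟨dJ, ⟨C, hC⟩, hJ'⟩ := hJ
  obtain ⟨dK, ⟨D, hD⟩, hK'⟩ := hK
  refine ⟨dJ.sub dK, ⟨C + D, fun v => (abs_sub _ _).trans (add_le_add (hC v) (hD v))⟩, fun i => ?_⟩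
  obtain ⟨C', hC'⟩ := hJ' i
  obtain ⟨D', hD'⟩ := hK' i
  refine ⟨C' + D', fun v => ?_⟩
  rw [pd_sub dJ dK]
  exact (abs_sub _ _).trans (add_le_add (hC' v) (hD' v))

lemma Nice.add {J K : E3 → ℝ} (hJ : Nice J) (hK : Nice K) : Nice (fun v => J v + K v) := by
  obtain ⟨dJ, ⟨C, hC⟩, hJ'⟩ := hJ
  obtain ⟨dK, ⟨D, hD⟩, hK'⟩ := hK
  refine ⟨dJ.add dK, ⟨C + D, fun v => (abs_add_le _ _).trans (add_le_add (hC v) (hD v))⟩,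
    fun i => ?_⟩
  obtain ⟨C', hC'⟩ := hJ' i
  obtain ⟨D', hD'⟩ := hK' i
  refine ⟨C' + D', fun v => ?_⟩
  rw [pd_add dJ dK]
  exact (abs_add_le _ _).trans (add_le_add (hC' v) (hD' v))

lemma Nice.mul_integrable {J : E3 → ℝ} (hJ : Nice J) (φ : SchwartzMap E3 ℝ) :
    Integrable (fun v => J v * φ v) := by
  obtain ⟨dJ, ⟨C, hC⟩, _⟩ := hJ
  exact bdd_mul_integrable dJ.continuous.aestronglyMeasurable hC φ

lemma Nice.pd_mul_integrable {J : E3 → ℝ} (hJ : Nice J) (i : Fin 3) (φ : SchwartzMap E3 ℝ) :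
    Integrable (fun v => pd i J v * φ v) := by
  obtain ⟨_, _, hJ'⟩ := hJ
  obtain ⟨C, hC⟩ := hJ' i
  exact bdd_mul_integrable (measurable_fderiv_apply_const ℝ J _).aestronglyMeasurable hC φ

lemma Nice.ibp {J : E3 → ℝ} (hJ : Nice J) (i : Fin 3) (φ : SchwartzMap E3 ℝ) :
    ∫ v, pd i J v * φ v = - ∫ v, J v * pd i φ v := by
  have h2 : Integrable (fun v => J v * pd i φ v) := by
    simpa only [coe_pdS] using hJ.mul_integrable (pdS i φ)
  have h := integral_mul_fderiv_eq_neg_fderiv_mul_of_integrable (𝕜 := ℝ) (f := J) (g := φ)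
    (μ := volume) (v := EuclideanSpace.single i (1:ℝ)) (hJ.pd_mul_integrable i φ)
    h2 (hJ.mul_integrable φ) (fun x _ => hJ.1 x) (fun x _ => φ.differentiable x)
  unfold pd
  rw [h, neg_neg]

/-- The `i`-th component of the Landau flux, after moving the derivative off `g`. -/
noncomputable def Jf (f g : SchwartzMap E3 ℝ) (i : Fin 3) (v : E3) : ℝ :=
  cv (aE 0 i 0) g v * pd 0 f v + cv (aE 0 i 1) g v * pd 1 f v + cv (aE 0 i 2) g v * pd 2 f v -
    cv (bE 0 i) g v * f v

lemma Jf_nice (f g : SchwartzMap E3 ℝ) (i : Fin 3) : Nice (Jf f g i) := by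
  unfold Jf
  simp only [← pdS_apply]
  exact ((((nice_cv (ker_a i 0) g).mul (nice_schwartz _)).add
    ((nice_cv (ker_a i 1) g).mul (nice_schwartz _))).add
    ((nice_cv (ker_a i 2) g).mul (nice_schwartz _))).sub
    ((nice_cv (ker_b i) g).mul (nice_schwartz _))

/-- `Q(g,f)` is the divergence of the flux `Jf`. -/
lemma landauQ_eq (f g : SchwartzMap E3 ℝ) (v : E3) :
    landauQ g f v = ∑ i, pd i (Jf f g i) v := by
  have h : ∀ i : Fin 3, (fun w => ∫ vs : E3, ∑ j : Fin 3,
      aK (w - vs) i j * (g vs * pd j f w - pd j g vs * f w)) = Jf f g i := by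
    intro i; funext w
    have e : ∀ vs : E3, ∑ j : Fin 3, aK (w - vs) i j * (g vs * pd j f w - pd j g vs * f w) =
        ∑ j : Fin 3, (aE 0 i j (w - vs) * g vs * pd j f w -
          aE 0 i j (w - vs) * pdS j g vs * f w) := fun vs => by
      refine Finset.sum_congr rfl fun j _ => ?_
      rw [aE_zero, pdS_apply]; ring
    simp only [e]
    have hI : ∀ j ∈ (Finset.univ : Finset (Fin 3)), Integrable (fun vs =>
        aE 0 i j (w - vs) * g vs * pd j f w - aE 0 i j (w - vs) * pdS j g vs * f w) := fun j _ =>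
      ((cv_integrable (ker_a i j) g w).mul_const _).sub
        ((cv_integrable (ker_a i j) (pdS j g) w).mul_const _)
    rw [integral_finsetSum _ hI]
    have e2 : ∀ j, ∫ vs, (aE 0 i j (w - vs) * g vs * pd j f w -
        aE 0 i j (w - vs) * pdS j g vs * f w) =
        cv (aE 0 i j) g w * pd j f w - cv (aE 0 i j) (pdS j g) w * f w := fun j => by
      rw [integral_sub ((cv_integrable (ker_a i j) g w).mul_const _)
        ((cv_integrable (ker_a i j) (pdS j g) w).mul_const _), integral_mul_const,
        integral_mul_const]
      rfl
    simp only [e2]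
    rw [Finset.sum_sub_distrib, ← Finset.sum_mul, sum_cv_a, Fin.sum_univ_three, Jf]
  unfold landauQ
  simp only [h]
  rfl

/-- `⟨v⟩^k ∇f` and `⟨v⟩^{-k} ∇(⟨v⟩^{2k} h)` are `∇F ∓ k v⟨v⟩⁻² F`, and the radial correction does
not contribute to `v × ·`. -/
lemma Sq_shift (F : SchwartzMap E3 ℝ) (k : ℝ) (v : E3) :
    Sq v (fun i => pd i F v + k * v i * (jap v ^ 2)⁻¹ * F v) ≤ (2 + 2 * k ^ 2) * Wd F v := by
  have hc : ‖v‖ ^ 2 * ((jap v ^ 2)⁻¹) ^ 2 ≤ 1 := by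
    have hj : (0:ℝ) < jap v ^ 2 := pow_pos (jap_pos v) 2
    rw [inv_pow, ← div_eq_mul_inv, div_le_one (by positivity)]
    have := jap_sq v
    nlinarith [sq_nonneg ‖v‖]
  rw [norm_sq_eq, Fin.sum_univ_three] at hc
  unfold Wd Sq
  simp only []
  generalize (jap v ^ 2)⁻¹ = c at *
  generalize pd 0 F v = p0
  generalize pd 1 F v = p1
  generalize pd 2 F v = p2
  generalize F v = u
  generalize v 0 = x at *
  generalize v 1 = y at *
  generalize v 2 = z at *
  have h1 := mul_le_mul_of_nonneg_left hc (show 0 ≤ 2 * (k * u) ^ 2 by positivity)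
  have q : ∀ p a : ℝ, (p + k * a * c * u) ^ 2 ≤ 2 * p ^ 2 + 2 * (k * u) ^ 2 * (a ^ 2 * c ^ 2) :=
    fun p a => by nlinarith [sq_nonneg (p - k * a * c * u)]
  have r : ∀ p q a b : ℝ, (a * (q + k * b * c * u) - b * (p + k * a * c * u)) ^ 2 =
      (a * q - b * p) ^ 2 := fun p q a b => by ring
  rw [r, r, r]
  have q0 := q p0 x
  have q1 := q p1 y
  have q2 := q p2 z
  have hk := sq_nonneg k
  have n1 : 0 ≤ (x * p1 - y * p0) ^ 2 := sq_nonneg _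
  have n2 : 0 ≤ (x * p2 - z * p0) ^ 2 := sq_nonneg _
  have n3 : 0 ≤ (y * p2 - z * p1) ^ 2 := sq_nonneg _
  have n4 : 0 ≤ k ^ 2 * (p0 ^ 2 + p1 ^ 2 + p2 ^ 2 + (x * p1 - y * p0) ^ 2 +
    (x * p2 - z * p0) ^ 2 + (y * p2 - z * p1) ^ 2) := by positivity
  nlinarith [sq_nonneg u]

lemma xi_eq (f : SchwartzMap E3 ℝ) (k : ℝ) (i : Fin 3) (v : E3) :
    pd i (wS k f) v + (-k) * v i * (jap v ^ 2)⁻¹ * wS k f v = jap v ^ k * pd i f v := by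
  have hx := jap_pos v
  rw [pd_wS, wS_apply, show k - 2 = k + -((2:ℕ):ℝ) by push_cast; ring, Real.rpow_add hx,
    Real.rpow_neg hx.le, Real.rpow_natCast]
  ring

lemma eta_eq (h : SchwartzMap E3 ℝ) (k : ℝ) (i : Fin 3) (v : E3) :
    jap v ^ k * (pd i (wS k h) v + k * v i * (jap v ^ 2)⁻¹ * wS k h v) = pd i (wS (2 * k) h) v := by
  have hx := jap_pos v
  rw [pd_wS, pd_wS, wS_apply, show k - 2 = k + -((2:ℕ):ℝ) by push_cast; ring,
    show 2 * k - 2 = k + k + -((2:ℕ):ℝ) by push_cast; ring, two_mul k, Real.rpow_add hx,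
    Real.rpow_add hx (k + k), Real.rpow_add hx k k,
    Real.rpow_neg hx.le, Real.rpow_natCast]
  ring

/-! ### Pointwise estimates of the integrand -/

/-- The diffusion matrix `a * g`, as a bilinear form in the quadratic form `Sq`. -/
lemma A_est {k : ℝ} (hk : 9 / 2 < k) : ∃ C, 0 < C ∧ ∀ (g : SchwartzMap E3 ℝ) (v : E3)
    (p q : Fin 3 → ℝ), |∑ i, ∑ j, cv (aE 0 i j) g v * p j * q i| ≤
      C * (√(∫ w, wS k g w ^ 2) * ((jap v ^ 3)⁻¹ * (√(Sq v p) * √(Sq v q)))) := by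
  obtain ⟨C, hC, h⟩ := L_one hk
  refine ⟨8 * C, by positivity, fun g v p q => ?_⟩
  have hI : ∀ i j, Integrable (fun w => aE 0 i j (v - w) * g w * p j * q i) := fun i j =>
    ((cv_integrable (ker_a i j) g v).mul_const _).mul_const _
  have e : ∑ i, ∑ j, cv (aE 0 i j) g v * p j * q i =
      ∫ w, (∑ i, ∑ j, aE 0 i j (v - w) * p j * q i) * g w := by
    have : ∀ w, (∑ i, ∑ j, aE 0 i j (v - w) * p j * q i) * g w =
        ∑ i, ∑ j, aE 0 i j (v - w) * g w * p j * q i := fun w => by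
      simp only [Finset.sum_mul]
      refine Finset.sum_congr rfl fun i _ => Finset.sum_congr rfl fun j _ => ?_
      ring
    simp only [this]
    rw [integral_finsetSum _ fun i _ => integrable_finsetSum _ fun j _ => hI i j]
    refine Finset.sum_congr rfl fun i _ => ?_
    rw [integral_finsetSum _ fun j _ => hI i j]
    refine Finset.sum_congr rfl fun j _ => ?_
    rw [integral_mul_const, integral_mul_const, cv]
  have hx := jap_pos v
  rw [e]
  refine (h g v (8 * (jap v ^ 3)⁻¹ * (√(Sq v p) * √(Sq v q))) _ (by positivity)
    fun w => a_bound v w p q).trans (le_of_eq ?_)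
  ring

/-- The two singular drift contributions: the difference to the soft drift, and the full drift
contracted with the logarithmic gradient of the weight. -/
lemma B_est {k : ℝ} (hk : 9 / 2 < k) : ∃ C, 0 < C ∧ ∀ (g : SchwartzMap E3 ℝ) (v : E3) (i : Fin 3),
    |cv (bE 0 i) g v - cv (bE 1 i) g v| ≤ C * ((jap v ^ 3)⁻¹ * √(Nn k g v)) ∧
    |cv (bE 0 i) g v * (v i * (jap v ^ 2)⁻¹)| ≤ C * ((jap v ^ 3)⁻¹ * √(Nn k g v)) := by
  obtain ⟨C, hC, h⟩ := L_two hk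
  refine ⟨48 * C, by positivity, fun g v i => ?_⟩
  have hx := jap_pos v
  have hN := Real.sqrt_nonneg (Nn k g v)
  constructor
  · rw [cv, cv, ← integral_sub (cv_integrable (ker_b i) g v) (cv_integrable (ker_bf i) g v)]
    have e : ∀ w, bE 0 i (v - w) * g w - bE 1 i (v - w) * g w =
      (bE 0 i (v - w) - bE 1 i (v - w)) * g w := fun w => by ring
    simp only [e]
    refine (h g v (48 * (jap v ^ 3)⁻¹) _ (by positivity) fun w => bdiff_bound i v w).trans
      (le_of_eq ?_)
    ring
  · rw [cv, ← integral_mul_const]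
    have e : ∀ w, bE 0 i (v - w) * g w * (v i * (jap v ^ 2)⁻¹) =
      (bE 0 i (v - w) * (v i * (jap v ^ 2)⁻¹)) * g w := fun w => by ring
    simp only [e]
    refine (h g v (8 * (jap v ^ 3)⁻¹) _ (by positivity) fun w => ?_).trans ?_
    · rw [abs_mul, abs_mul, abs_of_nonneg (by positivity : 0 ≤ (jap v ^ 2)⁻¹)]
      exact bcoord_bound i v w
    · have : 0 ≤ (jap v ^ 3)⁻¹ * (C * √(Nn k g v)) := by positivity
      linarith

/-- The soft drift and its derivative decay like `⟨v⟩^{-3/2}`, half of the weight of the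
anisotropic norm; the remaining factor `h` is therefore measured without any loss of weight. -/
lemma Bf_est {k : ℝ} (hk : 9 / 2 < k) : ∃ C, 0 < C ∧ ∀ (g : SchwartzMap E3 ℝ) (v : E3)
    (i : Fin 3),
    |cv (bE 1 i) g v| ≤ C * (√((jap v ^ 3)⁻¹) * √(∫ w, wS k g w ^ 2)) ∧
    |pd i (cv (bE 1 i) g) v| ≤ C * (√((jap v ^ 3)⁻¹) * √(∫ w, wS k g w ^ 2)) := by
  obtain ⟨C, hC, h⟩ := L_one hk
  refine ⟨32 * C, by positivity, fun g v i => ⟨?_, ?_⟩⟩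
  · refine (h g v (8 * √((jap v ^ 3)⁻¹)) _ (by positivity) fun w => bf_bound i v w).trans ?_
    have : 0 ≤ √((jap v ^ 3)⁻¹) * (C * √(∫ w, wS k g w ^ 2)) := by positivity
    linarith
  · rw [pd_bf_ibp]
    refine (h g v (32 * √((jap v ^ 3)⁻¹)) _ (by positivity) fun w => pd_bf_bound' i v w).trans
      (le_of_eq ?_)
    ring

lemma abs_le_sqrt_Wd (F : SchwartzMap E3 ℝ) (v : E3) : |F v| ≤ √(Wd F v) :=
  Real.abs_le_sqrt (by unfold Wd; linarith [Sq_nonneg v (fun i => pd i F v)])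

lemma abs_pd_le_sqrt_Wd (F : SchwartzMap E3 ℝ) (v : E3) (i : Fin 3) :
    |pd i F v| ≤ √(Wd F v) := by
  refine Real.abs_le_sqrt ?_
  unfold Wd Sq
  have n1 := sq_nonneg (v 0 * pd 1 F v - v 1 * pd 0 F v)
  have n2 := sq_nonneg (v 0 * pd 2 F v - v 2 * pd 0 F v)
  have n3 := sq_nonneg (v 1 * pd 2 F v - v 2 * pd 1 F v)
  have m0 := sq_nonneg (pd 0 F v)
  have m1 := sq_nonneg (pd 1 F v)
  have m2 := sq_nonneg (pd 2 F v)
  have m3 := sq_nonneg (F v)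
  fin_cases i <;> dsimp <;> linarith

/-- Pointwise bound of the flux term, with the contribution of the soft drift removed. -/
lemma G1_bound {k : ℝ} (hk : 9 / 2 < k) : ∃ C, 0 < C ∧ ∀ (f g h : SchwartzMap E3 ℝ) (v : E3),
    |∑ i, (Jf f g i v * pd i (wS (2 * k) h) v +
      cv (bE 1 i) g v * wS k f v * pd i (wS k h) v)| ≤
    C * (√((jap v ^ 3)⁻¹ * wS k f v ^ 2 * Nn k g v +
        (∫ w, wS k g w ^ 2) * ((jap v ^ 3)⁻¹ * Wd (wS k f) v)) *
      √((jap v ^ 3)⁻¹ * Wd (wS k h) v)) := by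
  obtain ⟨C₁, hC₁, hA⟩ := A_est hk
  obtain ⟨C₂, hC₂, hB⟩ := B_est hk
  have hk0 : 0 < k := by linarith
  refine ⟨C₁ * (2 + 2 * k ^ 2) + 3 * C₂ + 3 * (k * C₂), by positivity, fun f g h v => ?_⟩
  set F := wS k f with hF
  set H := wS k h with hH
  set ξ : Fin 3 → ℝ := fun i => pd i F v + (-k) * v i * (jap v ^ 2)⁻¹ * F v with hξ
  set η : Fin 3 → ℝ := fun i => pd i H v + k * v i * (jap v ^ 2)⁻¹ * H v with hη
  have hx := jap_pos v
  set X := (jap v ^ 3)⁻¹ with hX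
  have hX0 : 0 ≤ X := by positivity
  set I := ∫ w, wS k g w ^ 2 with hI
  have hI0 : 0 ≤ I := integral_nonneg fun w => sq_nonneg _
  have hN0 := Nn_nonneg k g v
  have hWF := Wd_nonneg F v
  have hWH := Wd_nonneg H v
  set N := Nn k g v
  set a := X * F v ^ 2 * N + I * (X * Wd F v) with ha
  set R := √a * √(X * Wd H v) with hR
  -- `ξ = ⟨v⟩^k ∇f` and `η = ⟨v⟩^{-k} ∇(⟨v⟩^{2k} h)`; expanding `η` in the drift term splits it into
  -- the part with `∇H`, where the soft drift is subtracted, and the part with `∇⟨v⟩^k`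
  have e : ∑ i, (Jf f g i v * pd i (wS (2 * k) h) v + cv (bE 1 i) g v * F v * pd i H v) =
      ∑ i, ∑ j, cv (aE 0 i j) g v * ξ j * η i -
        ∑ i, ((cv (bE 0 i) g v - cv (bE 1 i) g v) * F v * pd i H v) -
        ∑ i, k * (cv (bE 0 i) g v * (v i * (jap v ^ 2)⁻¹)) * F v * H v := by
    rw [← Finset.sum_sub_distrib, ← Finset.sum_sub_distrib]
    refine Finset.sum_congr rfl fun i _ => ?_
    have hη' : pd i (wS (2 * k) h) v = jap v ^ k * η i := (eta_eq h k i v).symm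
    have hξ' : ∀ j, ξ j = jap v ^ k * pd j f v := fun j => xi_eq f k j v
    have hFv : F v = f v * jap v ^ k := wS_apply k f v
    rw [Fin.sum_univ_three, hξ', hξ', hξ', hη', Jf, hFv]
    simp only [hη]
    ring
  have sS : ∀ {s b : ℝ}, 0 ≤ b → s ≤ (2 + 2 * k ^ 2) * b → √s ≤ √(2 + 2 * k ^ 2) * √b := by
    intro s b hb h
    rw [← Real.sqrt_mul (by positivity)]
    exact Real.sqrt_le_sqrt h
  have hSξ : √(Sq v ξ) ≤ √(2 + 2 * k ^ 2) * √(Wd F v) := by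
    refine sS hWF ((Sq_shift F (-k) v).trans (le_of_eq ?_)); ring
  have hSη : √(Sq v η) ≤ √(2 + 2 * k ^ 2) * √(Wd H v) := sS hWH (Sq_shift H k v)
  have hR1 : √I * (X * (√(Wd F v) * √(Wd H v))) ≤ R := by
    have : √(I * (X * Wd F v)) ≤ √a := Real.sqrt_le_sqrt (by
      rw [ha]; linarith [mul_nonneg (mul_nonneg hX0 (sq_nonneg (F v))) hN0])
    calc _ = √(I * (X * Wd F v)) * √(X * Wd H v) := by
          rw [Real.sqrt_mul hI0, Real.sqrt_mul hX0, Real.sqrt_mul hX0]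
          nth_rw 1 [← Real.mul_self_sqrt hX0]; ring
      _ ≤ _ := by rw [hR]; gcongr
  have hR2 : X * √N * |F v| * √(Wd H v) ≤ R := by
    have : √(X * F v ^ 2 * N) ≤ √a := Real.sqrt_le_sqrt (by
      rw [ha]; linarith [mul_nonneg hI0 (mul_nonneg hX0 hWF)])
    calc _ = √(X * F v ^ 2 * N) * √(X * Wd H v) := by
          rw [Real.sqrt_mul (by positivity), Real.sqrt_mul hX0, Real.sqrt_mul hX0,
            Real.sqrt_sq_eq_abs]
          nth_rw 1 [← Real.mul_self_sqrt hX0]; ring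
      _ ≤ _ := by rw [hR]; gcongr
  have t1 : |∑ i, ∑ j, cv (aE 0 i j) g v * ξ j * η i| ≤ C₁ * (2 + 2 * k ^ 2) * R := by
    calc _ ≤ C₁ * (√I * (X * (√(Sq v ξ) * √(Sq v η)))) := hA g v ξ η
      _ ≤ C₁ * (√I * (X * ((√(2 + 2 * k ^ 2) * √(Wd F v)) * (√(2 + 2 * k ^ 2) * √(Wd H v))))) := by
          gcongr
      _ = C₁ * (2 + 2 * k ^ 2) * (√I * (X * (√(Wd F v) * √(Wd H v)))) := by
          have := Real.mul_self_sqrt (show 0 ≤ 2 + 2 * k ^ 2 by positivity)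
          nth_rw 3 [← this]; ring
      _ ≤ _ := by gcongr
  have t2 : |∑ i, ((cv (bE 0 i) g v - cv (bE 1 i) g v) * F v * pd i H v)| ≤ 3 * C₂ * R := by
    refine (Finset.abs_sum_le_sum_abs _ _).trans ?_
    have : ∀ i ∈ (Finset.univ : Finset (Fin 3)),
        |(cv (bE 0 i) g v - cv (bE 1 i) g v) * F v * pd i H v| ≤ C₂ * R := fun i _ => by
      rw [abs_mul, abs_mul]
      calc _ ≤ (C₂ * (X * √N)) * |F v| * √(Wd H v) := by
            have := (hB g v i).1
            have := abs_pd_le_sqrt_Wd H v i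
            gcongr
        _ = C₂ * (X * √N * |F v| * √(Wd H v)) := by ring
        _ ≤ _ := by gcongr
    refine (Finset.sum_le_sum this).trans (le_of_eq ?_)
    simp; ring
  have t3 : |∑ i, k * (cv (bE 0 i) g v * (v i * (jap v ^ 2)⁻¹)) * F v * H v| ≤
      3 * (k * C₂) * R := by
    refine (Finset.abs_sum_le_sum_abs _ _).trans ?_
    have : ∀ i ∈ (Finset.univ : Finset (Fin 3)),
        |k * (cv (bE 0 i) g v * (v i * (jap v ^ 2)⁻¹)) * F v * H v| ≤ k * C₂ * R := fun i _ => by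
      rw [abs_mul, abs_mul, abs_mul, abs_of_pos hk0]
      calc _ ≤ k * (C₂ * (X * √N)) * |F v| * √(Wd H v) := by
            have := (hB g v i).2
            have := abs_le_sqrt_Wd H v
            gcongr
        _ = k * C₂ * (X * √N * |F v| * √(Wd H v)) := by ring
        _ ≤ _ := by gcongr
    refine (Finset.sum_le_sum this).trans (le_of_eq ?_)
    simp; ring
  rw [e]
  refine (abs_sub _ _).trans ?_
  have := abs_sub (∑ i, ∑ j, cv (aE 0 i j) g v * ξ j * η i)
    (∑ i, ((cv (bE 0 i) g v - cv (bE 1 i) g v) * F v * pd i H v))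
  linarith

/-- Pointwise bound of the soft drift term after its derivative has been moved off `h`. -/
lemma G2_bound {k : ℝ} (hk : 9 / 2 < k) : ∃ C, 0 < C ∧ ∀ (f g h : SchwartzMap E3 ℝ) (v : E3),
    |∑ i, pd i (fun v => cv (bE 1 i) g v * wS k f v) v * wS k h v| ≤
    C * √(∫ w, wS k g w ^ 2) * (√((jap v ^ 3)⁻¹ * Wd (wS k f) v) * √(wS k h v ^ 2)) := by
  obtain ⟨C, hC, hB⟩ := Bf_est hk
  refine ⟨6 * C, by positivity, fun f g h v => ?_⟩
  have hX0 : 0 ≤ (jap v ^ 3)⁻¹ := inv_nonneg.2 (pow_nonneg (jap_pos v).le 3)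
  rw [Real.sqrt_mul hX0, Real.sqrt_sq_eq_abs]
  refine (Finset.abs_sum_le_sum_abs _ _).trans ?_
  have : ∀ i ∈ (Finset.univ : Finset (Fin 3)),
      |pd i (fun v => cv (bE 1 i) g v * wS k f v) v * wS k h v| ≤
      2 * C * √(∫ w, wS k g w ^ 2) * (√((jap v ^ 3)⁻¹) * √(Wd (wS k f) v) * |wS k h v|) := by
    intro i _
    rw [pd_mul (cv_differentiable (ker_bf i) g) (wS k f).differentiable, abs_mul]
    obtain ⟨b1, b2⟩ := hB g v i
    have w1 := abs_le_sqrt_Wd (wS k f) v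
    have w2 := abs_pd_le_sqrt_Wd (wS k f) v i
    set K := C * (√((jap v ^ 3)⁻¹) * √(∫ w, wS k g w ^ 2)) with hK
    have hK0 : 0 ≤ K := by positivity
    have : |pd i (cv (bE 1 i) g) v * wS k f v + cv (bE 1 i) g v * pd i (wS k f) v| ≤
        2 * (K * √(Wd (wS k f) v)) := by
      refine (abs_add_le _ _).trans ?_
      rw [abs_mul, abs_mul, two_mul]
      gcongr
    calc _ ≤ 2 * (K * √(Wd (wS k f) v)) * |wS k h v| := by gcongr
      _ = _ := by rw [hK]; ring
  refine (Finset.sum_le_sum this).trans (le_of_eq ?_)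
  simp; ring

/-! ### The bilinear estimate -/

/-- Integrating by parts twice: once for the divergence in `Q`, once for the soft drift. -/
lemma pair_eq (k : ℝ) (f g h : SchwartzMap E3 ℝ) :
    pairL (landauQ g f) (fun v => h v * jap v ^ (2 * k)) =
      -(∫ v, ∑ i, (Jf f g i v * pd i (wS (2 * k) h) v +
        cv (bE 1 i) g v * wS k f v * pd i (wS k h) v)) -
      ∫ v, ∑ i, pd i (fun v => cv (bE 1 i) g v * wS k f v) v * wS k h v := by
  have hJ := fun i => Jf_nice f g i
  have hS := fun i => (nice_cv (ker_bf i) g).mul (nice_schwartz (wS k f))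
  have i1 : ∀ i, Integrable (fun v => Jf f g i v * pd i (wS (2 * k) h) v) := fun i => by
    simpa only [pdS_apply] using (hJ i).mul_integrable (pdS i (wS (2 * k) h))
  have i2 : ∀ i, Integrable (fun v => cv (bE 1 i) g v * wS k f v * pd i (wS k h) v) := fun i => by
    simpa only [pdS_apply] using (hS i).mul_integrable (pdS i (wS k h))
  have e1 : pairL (landauQ g f) (fun v => h v * jap v ^ (2 * k)) =
      ∑ i, ∫ v, pd i (Jf f g i) v * wS (2 * k) h v := by
    rw [← integral_finsetSum _ fun i _ => (hJ i).pd_mul_integrable i (wS (2 * k) h), pairL]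
    simp only [landauQ_eq, wS_apply, Finset.sum_mul]
  rw [e1, integral_finsetSum _ fun i _ => (hS i).pd_mul_integrable i (wS k h),
    integral_finsetSum (μ := volume) (f := fun i v => Jf f g i v * pd i (wS (2 * k) h) v +
        cv (bE 1 i) g v * wS k f v * pd i (wS k h) v) _ fun i _ => (i1 i).add (i2 i)]
  rw [← Finset.sum_neg_distrib, ← Finset.sum_sub_distrib]
  refine Finset.sum_congr rfl fun i _ => ?_
  rw [integral_add (i1 i) (i2 i), (hJ i).ibp, (hS i).ibp]
  ring

/-- for `k > 9/2` there is `C = C(k)` such that for all Schwartz `f, g, h`: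
`|⟨Q(g,f), h⟨v⟩^{2k}⟩| ≤ C ‖g‖_{L²_k} ‖f⟨v⟩^k‖_{𝖧¹_A} ( ‖h⟨v⟩^k‖_{𝖧¹_A} + ‖h‖_{L²_k} )`. -/
theorem landau_upper_bound_anisotropic' (k : ℝ) (hk : 9 / 2 < k) :
    ∃ C > 0, ∀ f g h : SchwartzMap E3 ℝ,
      |pairL (landauQ (⇑g) (⇑f)) (fun v => h v * jap v ^ (2 * k))|
      ≤ C * Lpl 2 k (⇑g) * HA (fun v => f v * jap v ^ k) *
          (HA (fun v => h v * jap v ^ k) + Lpl 2 k (⇑h)) := by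
  obtain ⟨C₁, hC₁, h1⟩ := G1_bound hk
  obtain ⟨C₂, hC₂, h2⟩ := G2_bound hk
  refine ⟨5 * C₁ + C₂, by positivity, fun f g h => ?_⟩
  rw [pair_eq, ← coe_wS, ← coe_wS, HA_eq, HA_eq, Lpl_wS, Lpl_wS]
  have hX : ∀ v : E3, 0 ≤ (jap v ^ 3)⁻¹ := fun v => inv_nonneg.2 (pow_nonneg (jap_pos v).le 3)
  set I := ∫ w, wS k g w ^ 2
  have hI0 : 0 ≤ I := integral_nonneg fun w => sq_nonneg _
  set F := wS k f
  set H := wS k h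
  have hWF : ∀ v, 0 ≤ (jap v ^ 3)⁻¹ * Wd F v := fun v => mul_nonneg (hX v) (Wd_nonneg F v)
  have hWH : ∀ v, 0 ≤ (jap v ^ 3)⁻¹ * Wd H v := fun v => mul_nonneg (hX v) (Wd_nonneg H v)
  obtain ⟨n1, n2⟩ := N_bound k F g
  set MF := ∫ v, (jap v ^ 3)⁻¹ * Wd F v with hMF
  set MH := ∫ v, (jap v ^ 3)⁻¹ * Wd H v
  have hMF0 : 0 ≤ MF := integral_nonneg hWF
  have b1 := cs_bound hC₁.le
    (a := fun v => (jap v ^ 3)⁻¹ * F v ^ 2 * Nn k g v + I * ((jap v ^ 3)⁻¹ * Wd F v))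
    (b := fun v => (jap v ^ 3)⁻¹ * Wd H v)
    (fun v => add_nonneg (mul_nonneg (mul_nonneg (hX v) (sq_nonneg _)) (Nn_nonneg k g v))
      (mul_nonneg hI0 (hWF v))) hWH (n1.add ((XW_integrable F).const_mul I)) (XW_integrable H)
    (h1 f g h)
  have b2 := cs_bound (mul_nonneg hC₂.le (Real.sqrt_nonneg I))
    (a := fun v => (jap v ^ 3)⁻¹ * Wd F v) (b := fun v => H v ^ 2) hWF (fun v => sq_nonneg _)
    (XW_integrable F) (sq_integrable H) (h2 f g h)
  have b3 : √(∫ v, ((jap v ^ 3)⁻¹ * F v ^ 2 * Nn k g v + I * ((jap v ^ 3)⁻¹ * Wd F v))) ≤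
      5 * (√I * √MF) := by
    rw [integral_add n1 ((XW_integrable F).const_mul I), integral_const_mul, ← hMF,
      ← Real.sqrt_mul hI0]
    refine Real.sqrt_le_iff.2 ⟨by positivity, ?_⟩
    rw [mul_pow, Real.sq_sqrt (by positivity)]
    have : 0 ≤ I * MF := by positivity
    linarith
  have b4 := b1.trans (mul_le_mul_of_nonneg_left
    (mul_le_mul_of_nonneg_right b3 (Real.sqrt_nonneg MH)) hC₁.le)
  refine (abs_sub _ _).trans ?_
  rw [abs_neg]
  refine (add_le_add b4 b2).trans ?_
  have p1 : 0 ≤ C₂ * (√I * √MF * √MH) := by positivity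
  have p2 : 0 ≤ C₁ * (√I * √MF * √(∫ v, H v ^ 2)) := by positivity
  nlinarith
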